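/- arXiv:0806.0312 — 9 statements merged into one kernel-verified Lean document; each statement's English description precedes it below -/
import Mathlib

section
/- Let t₁ ∈ ℝ and let H : [t₁,∞) → ℝ be a function such that |H| is integrable on [t₁,∞). If y : [t₁,∞) → ℝ is differentiable with y(t) > 0 for all t ≥ t₁ and satisfies the differential inequality |y′(t)| ≤ √3·|H(t)|·y(t) for all t ≥ t₁, then y is bounded above on [t₁,∞) and the integral ∫_{t₁}^{T} 1/y(t) dt tends to +∞ as T → ∞ (equivalently, 1/y is not integrable on [t₁,∞)). -/
open Filter Topology Set MeasureTheory intervalIntegral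

/-!
Dividing `y' ≤ φ y` by `y > 0` gives `(log y)' ≤ φ`, so an integrable `φ` lets `log y` grow by at
most `∫ |φ|`, and `y` stays below some `M`. Then `1 / y ≥ 1 / M > 0`, so the integral of `1 / y`
grows at least linearly.
-/

section Gronwall

variable {y y' φ : ℝ → ℝ} {a : ℝ}

theorem le_mul_exp_integral_of_deriv_right_le_mul {b : ℝ} (hab : a ≤ b)
    (hφ : IntegrableOn φ (Icc a b)) (hy : ContinuousOn y (Icc a b))
    (hpos : ∀ t ∈ Icc a b, 0 < y t)
    (hy' : ∀ t ∈ Ioo a b, HasDerivWithinAt y (y' t) (Ioi t) t)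
    (hle : ∀ t ∈ Ioo a b, y' t ≤ φ t * y t) :
    y b ≤ y a * Real.exp (∫ t in a..b, φ t) := by
  have hpos' : ∀ t ∈ Ioo a b, 0 < y t := fun t ht => hpos t (Ioo_subset_Icc_self ht)
  have hlog : Real.log (y b) - Real.log (y a) ≤ ∫ t in a..b, φ t :=
    sub_le_integral_of_hasDeriv_right_of_le hab (hy.log fun t ht => (hpos t ht).ne')
      (fun t ht => (hy' t ht).log (hpos' t ht).ne') hφ
      fun t ht => (div_le_iff₀ (hpos' t ht)).2 (hle t ht)
  have hya : 0 < y a := hpos a (left_mem_Icc.2 hab)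
  have hyb : 0 < y b := hpos b (right_mem_Icc.2 hab)
  calc
    y b = Real.exp (Real.log (y b)) := (Real.exp_log hyb).symm
    _ ≤ Real.exp (Real.log (y a) + ∫ t in a..b, φ t) :=
      Real.exp_le_exp.2 (sub_le_iff_le_add'.1 hlog)
    _ = y a * Real.exp (∫ t in a..b, φ t) := by rw [Real.exp_add, Real.exp_log hya]

theorem le_mul_exp_integral_abs_Ici_of_deriv_right_le_mul
    (hφ : IntegrableOn φ (Ici a)) (hy : ContinuousOn y (Ici a))
    (hpos : ∀ t ∈ Ici a, 0 < y t)
    (hy' : ∀ t ∈ Ioi a, HasDerivWithinAt y (y' t) (Ioi t) t)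
    (hle : ∀ t ∈ Ioi a, y' t ≤ φ t * y t) {b : ℝ} (hab : a ≤ b) :
    y b ≤ y a * Real.exp (∫ t in Ici a, |φ t|) := by
  have hint : ∫ t in a..b, φ t ≤ ∫ t in Ici a, |φ t| := calc
    ∫ t in a..b, φ t ≤ ∫ t in a..b, |φ t| :=
      (le_abs_self _).trans (abs_integral_le_integral_abs hab)
    _ = ∫ t in Ioc a b, |φ t| := integral_of_le hab
    _ ≤ ∫ t in Ici a, |φ t| :=
      setIntegral_mono_set hφ.abs (Eventually.of_forall fun t => abs_nonneg (φ t))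
        (Ioc_subset_Ioi_self.trans Ioi_subset_Ici_self).eventuallyLE
  calc
    y b ≤ y a * Real.exp (∫ t in a..b, φ t) :=
      le_mul_exp_integral_of_deriv_right_le_mul hab (hφ.mono_set Icc_subset_Ici_self)
        (hy.mono Icc_subset_Ici_self) (fun t ht => hpos t ht.1) (fun t ht => hy' t ht.1)
        fun t ht => hle t ht.1
    _ ≤ y a * Real.exp (∫ t in Ici a, |φ t|) :=
      mul_le_mul_of_nonneg_left (Real.exp_le_exp.2 hint) (hpos a self_mem_Ici).le

end Gronwall

theorem tendsto_intervalIntegral_atTop_of_const_le {f : ℝ → ℝ} {a c : ℝ} (hc : 0 < c)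
    (hf : LocallyIntegrableOn f (Ici a)) (hle : ∀ t ∈ Ioi a, c ≤ f t) :
    Tendsto (fun T => ∫ t in a..T, f t) atTop atTop := by
  have hlin : Tendsto (fun T => (T - a) * c) atTop atTop :=
    (tendsto_atTop_add_const_right atTop (-a) tendsto_id).atTop_mul_const hc
  refine tendsto_atTop_mono' atTop ?_ hlin
  filter_upwards [eventually_ge_atTop a] with T hT
  have hfT : IntervalIntegrable f volume a T :=
    (intervalIntegrable_iff_integrableOn_Icc_of_le hT).2
      (hf.integrableOn_compact_subset Icc_subset_Ici_self isCompact_Icc)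
  calc
    (T - a) * c = ∫ _ in a..T, c := by rw [intervalIntegral.integral_const, smul_eq_mul]
    _ ≤ ∫ t in a..T, f t :=
      integral_mono_on_of_le_Ioo hT intervalIntegrable_const hfT fun t ht => hle t ht.1

theorem not_integrableOn_Ioi_of_tendsto_cobounded {E : Type*} [NormedAddCommGroup E]
    [NormedSpace ℝ E] {μ : Measure ℝ} {f : ℝ → E} {a : ℝ}
    (h : Tendsto (fun T => ∫ t in a..T, f t ∂μ) atTop (Bornology.cobounded E)) :
    ¬ IntegrableOn f (Ioi a) μ := fun hf =>
  (intervalIntegral_tendsto_integral_Ioi a hf tendsto_id).not_tendsto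
    (Metric.disjoint_nhds_cobounded _) h

theorem hubble_integrability_implies_completeness_general {t₁ : ℝ} {φ y y' : ℝ → ℝ}
    (hφ : IntegrableOn φ (Ici t₁)) (hy : ContinuousOn y (Ici t₁))
    (hpos : ∀ t ∈ Ici t₁, 0 < y t)
    (hy' : ∀ t ∈ Ioi t₁, HasDerivWithinAt y (y' t) (Ioi t) t)
    (hle : ∀ t ∈ Ioi t₁, y' t ≤ φ t * y t) :
    (∃ M : ℝ, ∀ t ∈ Ici t₁, y t ≤ M) ∧
    Tendsto (fun T => ∫ t in t₁..T, 1 / y t) atTop atTop ∧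
    ¬ IntegrableOn (fun t => 1 / y t) (Ici t₁) := by
  obtain ⟨M, hM⟩ : ∃ M : ℝ, ∀ t ∈ Ici t₁, y t ≤ M :=
    ⟨_, fun _ => le_mul_exp_integral_abs_Ici_of_deriv_right_le_mul hφ hy hpos hy' hle⟩
  have hM_pos : 0 < M := (hpos t₁ self_mem_Ici).trans_le (hM t₁ self_mem_Ici)
  have hcont : ContinuousOn (fun t => 1 / y t) (Ici t₁) :=
    continuousOn_const.div hy fun t ht => (hpos t ht).ne'
  have hlim : Tendsto (fun T => ∫ t in t₁..T, 1 / y t) atTop atTop :=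
    tendsto_intervalIntegral_atTop_of_const_le (one_div_pos.2 hM_pos)
      (hcont.locallyIntegrableOn measurableSet_Ici)
      fun t ht => one_div_le_one_div_of_le (hpos t (Ioi_subset_Ici_self ht))
        (hM t (Ioi_subset_Ici_self ht))
  have hdiv : ¬ IntegrableOn (fun t => 1 / y t) (Ioi t₁) :=
    not_integrableOn_Ioi_of_tendsto_cobounded
      (hlim.mono_right IsOrderBornology.atTop_le_cobounded)
  exact ⟨⟨M, hM⟩, hlim, fun hint => hdiv (hint.mono_set Ioi_subset_Ici_self)⟩

/-- If `|H|` is integrable on `[t₁,∞)` and `y > 0` satisfies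
`|y′| ≤ √3·|H|·y` on `[t₁,∞)`, then `y` is bounded above there and
`∫_{t₁}^{T} 1/y` tends to `+∞` as `T → ∞` (equivalently, `1/y` is not
integrable on `[t₁,∞)`). -/
theorem hubble_integrability_implies_completeness
    (t₁ : ℝ) (H y : ℝ → ℝ)
    (hH : IntegrableOn (fun t => |H t|) (Set.Ici t₁))
    (hy_diff : ∀ t ∈ Set.Ici t₁, DifferentiableAt ℝ y t)
    (hy_pos : ∀ t ∈ Set.Ici t₁, 0 < y t)
    (hy_ineq : ∀ t ∈ Set.Ici t₁, |deriv y t| ≤ Real.sqrt 3 * |H t| * y t) :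
    (∃ M : ℝ, ∀ t ∈ Set.Ici t₁, y t ≤ M) ∧
    Tendsto (fun T => ∫ t in t₁..T, 1 / y t) atTop atTop ∧
    ¬ IntegrableOn (fun t => 1 / y t) (Set.Ici t₁) :=
  hubble_integrability_implies_completeness_general (hH.const_mul (Real.sqrt 3))
    (fun t ht => (hy_diff t ht).continuousAt.continuousWithinAt) hy_pos
    (fun t ht => (hy_diff t (Ioi_subset_Ici_self ht)).hasDerivAt.hasDerivWithinAt)
    fun t ht => (le_abs_self _).trans (hy_ineq t (Ioi_subset_Ici_self ht))
end

section
/- Let t₁ < t₂ be reals, let k ∈ ℝ, and let a, φ : (t₁,t₂) → ℝ be twice differentiable with a(t) > 0, satisfying the massless scalar-field FRW equations (a′/a)² = φ′²/6 − k/a² and φ″ + 3(a′/a)φ′ = 0 on (t₁,t₂). Then |φ′(t)| → ∞ as t → t₁⁺ if and only if, as t → t₁⁺: a(t) → 0, |a′(t)/a(t)| → ∞, |E|(t) → ∞ and |D|(t) → ∞, where |E| = φ′²/√3 and |D| = φ′²/(2√3) are the electric parts of the Bel-Robinson energy (past-collapse singularity of type (S₁,N₁,B₁)). -/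
open Filter Topology Set

/-!
The continuity equation makes `φ′ a³` a constant `c`. Hence `a³ = c / φ′` tends to `0` when `φ′`
blows up, and `a⁻³ = φ′ / c = o(φ′³)`, that is `a⁻¹ = o(φ′)`: the curvature term `k / a²` is
negligible against the kinetic term in the Friedmann equation, so `H² ∼ φ′² / 6`.
-/

open Asymptotics Bornology

theorem tendsto_sq_atTop_iff_tendsto_abs_atTop {α R : Type*} [Ring R] [LinearOrder R]
    [IsStrictOrderedRing R] {l : Filter α} {f : α → R} :
    Tendsto (fun x => f x ^ 2) l atTop ↔ Tendsto (fun x => |f x|) l atTop := by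
  constructor
  · intro h
    refine tendsto_atTop.2 fun b => ?_
    filter_upwards [h.eventually_ge_atTop (b ^ 2)] with x hx
    exact (le_abs_self b).trans (sq_le_sq.1 hx)
  · intro h
    simpa only [Function.comp_def, sq_abs] using (tendsto_pow_atTop two_ne_zero).comp h

theorem exists_mul_pow_eq_const_of_deriv_add_mul_eq_zero {𝕜 : Type*} [RCLike 𝕜] {s : Set 𝕜}
    (hs : IsOpen s) (hs' : IsPreconnected s) {a ψ : 𝕜 → 𝕜} {n : ℕ}
    (ha : ∀ t ∈ s, DifferentiableAt 𝕜 a t) (hψ : ∀ t ∈ s, DifferentiableAt 𝕜 ψ t)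
    (ha₀ : ∀ t ∈ s, a t ≠ 0)
    (hcont : ∀ t ∈ s, deriv ψ t + n * (deriv a t / a t) * ψ t = 0) :
    ∃ c, ∀ t ∈ s, ψ t * a t ^ n = c := by
  have hderiv : ∀ t ∈ s, HasDerivAt (fun t => ψ t * a t ^ n) 0 t := by
    intro t ht
    refine ((hψ t ht).hasDerivAt.fun_mul ((ha t ht).hasDerivAt.fun_pow n)).congr_deriv ?_
    have ha_ne := ha₀ t ht
    rw [eq_neg_of_add_eq_zero_left (hcont t ht)]
    cases n with
    | zero => simp
    | succ n =>
      rw [Nat.add_sub_cancel]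
      field_simp
      ring
  exact hs.exists_is_const_of_deriv_eq_zero hs'
    (fun t ht => (hderiv t ht).differentiableAt.differentiableWithinAt)
    (fun t ht => (hderiv t ht).deriv)

section MulPowEqConst

variable {α 𝕜 : Type*} [NormedField 𝕜] {l : Filter α} {a ψ : α → 𝕜} {c : 𝕜} {n : ℕ}

theorem tendsto_zero_of_mul_pow_eq_const (hψ : Tendsto ψ l (cobounded 𝕜)) (hn : n ≠ 0)
    (hc : ∀ᶠ t in l, ψ t * a t ^ n = c) : Tendsto a l (𝓝 0) := by
  have hpow : Tendsto (fun t => a t ^ n) l (𝓝 0) := by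
    have hinv : Tendsto (fun t => (ψ t)⁻¹ * c) l (𝓝 0) := by
      simpa only [Function.comp_def, zero_mul] using (tendsto_inv₀_cobounded.comp hψ).mul_const c
    refine hinv.congr' ?_
    filter_upwards [hc, hψ.eventually_ne_cobounded 0] with t ht hψt
    rw [← ht, inv_mul_cancel_left₀ hψt]
  rw [← isLittleO_one_iff 𝕜] at hpow ⊢
  refine IsLittleO.of_pow ?_ hn
  simpa only [Pi.pow_def, one_pow] using hpow

theorem inv_isLittleO_of_mul_pow_eq_const (hψ : Tendsto ψ l (cobounded 𝕜)) (hn : 1 < n)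
    (hc : ∀ᶠ t in l, ψ t * a t ^ n = c) : (fun t => (a t)⁻¹) =o[l] ψ := by
  have hpow : (fun t => (a t)⁻¹ ^ n) =ᶠ[l] fun t => c⁻¹ * ψ t := by
    filter_upwards [hc, hψ.eventually_ne_cobounded 0] with t ht hψt
    rw [← ht, mul_inv_rev, inv_mul_cancel_right₀ hψt, inv_pow]
  have hlt : ψ =o[l] fun t => ψ t ^ n := by
    simpa only [Function.comp_def, pow_one] using
      (isLittleO_pow_pow_cobounded_of_lt (R := 𝕜) hn).comp_tendsto hψ
  exact IsLittleO.of_pow (hpow.trans_isLittleO (hlt.const_mul_left c⁻¹)) (by lia)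

end MulPowEqConst

theorem tendsto_mul_sq_sub_div_sq_atTop {α : Type*} {l : Filter α} {a ψ : α → ℝ} {m : ℝ}
    (hm : 0 < m) (k : ℝ) (hψ : Tendsto (fun t => |ψ t|) l atTop)
    (ha : (fun t => (a t)⁻¹) =o[l] ψ) :
    Tendsto (fun t => m * ψ t ^ 2 - k / a t ^ 2) l atTop := by
  have hkinetic : Tendsto (fun t => m * ψ t ^ 2) l atTop :=
    (tendsto_sq_atTop_iff_tendsto_abs_atTop.2 hψ).const_mul_atTop hm
  have hcurvature : (fun t => k / a t ^ 2) =o[l] fun t => m * ψ t ^ 2 := by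
    simpa only [inv_pow, ← div_eq_mul_inv] using
      ((ha.pow two_pos).const_mul_left k).const_mul_right hm.ne'
  exact (IsEquivalent.refl.sub_isLittleO hcurvature).symm.tendsto_atTop hkinetic

theorem massless_scalar_field_past_collapse_general
    (t₁ t₂ k : ℝ) (hlt : t₁ < t₂) (a φ : ℝ → ℝ)
    (ha : ∀ t ∈ Set.Ioo t₁ t₂, DifferentiableAt ℝ a t)
    (hφ : ∀ t ∈ Set.Ioo t₁ t₂, DifferentiableAt ℝ φ t)
    (hφ' : ∀ t ∈ Set.Ioo t₁ t₂, DifferentiableAt ℝ (deriv φ) t)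
    (ha₀ : ∀ t ∈ Set.Ioo t₁ t₂, a t ≠ 0)
    (hFried : ∀ t ∈ Set.Ioo t₁ t₂,
      (deriv a t / a t) ^ 2 = (deriv φ t) ^ 2 / 6 - k / (a t) ^ 2)
    (hcont : ∀ t ∈ Set.Ioo t₁ t₂,
      deriv (deriv φ) t + 3 * (deriv a t / a t) * deriv φ t = 0) :
    Tendsto (fun t => |deriv φ t|) (𝓝[>] t₁) atTop ↔
      (Tendsto a (𝓝[>] t₁) (𝓝 0) ∧
       Tendsto (fun t => |deriv a t / a t|) (𝓝[>] t₁) atTop ∧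
       Tendsto (fun t => (deriv φ t) ^ 2 / Real.sqrt 3) (𝓝[>] t₁) atTop ∧
       Tendsto (fun t => (deriv φ t) ^ 2 / (2 * Real.sqrt 3)) (𝓝[>] t₁) atTop) := by
  have hIoo : ∀ᶠ t in 𝓝[>] t₁, t ∈ Ioo t₁ t₂ := Ioo_mem_nhdsGT hlt
  rw [tendsto_div_const_atTop_of_pos (by positivity),
    tendsto_div_const_atTop_of_pos (by positivity), tendsto_sq_atTop_iff_tendsto_abs_atTop]
  refine ⟨fun h => ?_, fun h => h.2.2.1⟩
  obtain ⟨c, hc⟩ := exists_mul_pow_eq_const_of_deriv_add_mul_eq_zero (n := 3) isOpen_Ioo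
    isPreconnected_Ioo ha hφ' ha₀ (mod_cast hcont)
  have hconst : ∀ᶠ t in 𝓝[>] t₁, deriv φ t * a t ^ 3 = c := hIoo.mono hc
  have hcobdd : Tendsto (deriv φ) (𝓝[>] t₁) (cobounded ℝ) :=
    tendsto_norm_atTop_iff_cobounded.1 h
  have hcollapse : Tendsto a (𝓝[>] t₁) (𝓝 0) :=
    tendsto_zero_of_mul_pow_eq_const hcobdd three_ne_zero hconst
  have hHubble : Tendsto (fun t => (deriv a t / a t) ^ 2) (𝓝[>] t₁) atTop := by
    refine (tendsto_mul_sq_sub_div_sq_atTop (m := 1 / 6) (by norm_num) k h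
      (inv_isLittleO_of_mul_pow_eq_const hcobdd (by norm_num) hconst)).congr' ?_
    filter_upwards [hIoo] with t ht
    rw [hFried t ht, one_div_mul_eq_div]
  exact ⟨hcollapse, tendsto_sq_atTop_iff_tendsto_abs_atTop.1 hHubble, h, h⟩

/-- In an isotropic universe with a massless scalar field
(Friedmann equation `H² = φ′²/6 − k/a²`, continuity equation `φ″ + 3Hφ′ = 0`
on `(t₁,t₂)`, `a > 0`), `|φ′| → ∞` as `t → t₁⁺` iff `a → 0`, `|H| → ∞`,
`|E| = φ′²/√3 → ∞` and `|D| = φ′²/(2√3) → ∞` as `t → t₁⁺`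
(past-collapse singularity of type `(S₁,N₁,B₁)`). -/
theorem massless_scalar_field_past_collapse
    (t₁ t₂ k : ℝ) (hlt : t₁ < t₂) (a φ : ℝ → ℝ)
    (ha : ∀ t ∈ Set.Ioo t₁ t₂, DifferentiableAt ℝ a t)
    (ha' : ∀ t ∈ Set.Ioo t₁ t₂, DifferentiableAt ℝ (deriv a) t)
    (hφ : ∀ t ∈ Set.Ioo t₁ t₂, DifferentiableAt ℝ φ t)
    (hφ' : ∀ t ∈ Set.Ioo t₁ t₂, DifferentiableAt ℝ (deriv φ) t)
    (hapos : ∀ t ∈ Set.Ioo t₁ t₂, 0 < a t)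
    (hFried : ∀ t ∈ Set.Ioo t₁ t₂,
      (deriv a t / a t) ^ 2 = (deriv φ t) ^ 2 / 6 - k / (a t) ^ 2)
    (hcont : ∀ t ∈ Set.Ioo t₁ t₂,
      deriv (deriv φ) t + 3 * (deriv a t / a t) * deriv φ t = 0) :
    Tendsto (fun t => |deriv φ t|) (𝓝[>] t₁) atTop ↔
      (Tendsto a (𝓝[>] t₁) (𝓝 0) ∧
       Tendsto (fun t => |deriv a t / a t|) (𝓝[>] t₁) atTop ∧
       Tendsto (fun t => (deriv φ t) ^ 2 / Real.sqrt 3) (𝓝[>] t₁) atTop ∧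
       Tendsto (fun t => (deriv φ t) ^ 2 / (2 * Real.sqrt 3)) (𝓝[>] t₁) atTop) := by
  exact massless_scalar_field_past_collapse_general t₁ t₂ k hlt a φ ha hφ hφ'
    (fun t ht => (hapos t ht).ne') hFried hcont
end

section
/- Let t₁ < t₂, let γ > 0, λ < 1 and k ∈ {0,−1} (flat or open universe), and let a, μ : (t₁,t₂) → ℝ be differentiable with a(t) > 0 and μ(t) > 0, satisfying the continuity equation μ′ + 3(a′/a)·γμ^λ = 0 (fluid with equation of state p + μ = γμ^λ) and the Friedmann equation (a′/a)² = μ/3 − k/a². Then μ(t) → ∞ as t → t₁⁺ if and only if, as t → t₁⁺: a(t) → 0, |a′(t)/a(t)| → ∞, |E|(t) → ∞ and |D|(t) → ∞, where |E| = |−2μ + 3γμ^λ|/(2√3) and |D| = μ/√3 (past-collapse singularity of type (S₁,N₁,B₁)). -/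
/-!
Integrated, the continuity equation says that the scale factor is a constant multiple of
`exp (μ ^ (1 - λ) / (3γ(λ - 1)))`, which for `γ > 0` and `λ < 1` decays faster than every power of
`μ`. So `μ → ∞` forces `a → 0`, and even `μ a² → 0`. Multiplied by `a²`, the Friedmann equation
reads `k = μ a² / 3 - (a H)²`, so in this limit `k ≤ 0`: a closed universe never reaches infinite
density, and otherwise `H² ≥ μ / 3`. Finally `|E|` is governed by its linear term, since `λ < 1`.
-/

open Filter Topology Set

section Growth

theorem isLittleO_rpow_id_atTop {lam : ℝ} (hlam : lam < 1) :
    (fun x : ℝ => x ^ lam) =o[atTop] (fun x => x) := by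
  refine Asymptotics.isLittleO_of_tendsto' ?_ ?_
  · filter_upwards [eventually_ne_atTop 0] with x hx hx0 using absurd hx0 hx
  · refine (tendsto_rpow_neg_atTop (sub_pos.2 hlam)).congr' ?_
    filter_upwards [eventually_gt_atTop 0] with x hx
    rw [neg_sub, Real.rpow_sub_one hx.ne']

theorem tendsto_abs_mul_add_mul_rpow_atTop {c lam : ℝ} (hc : c ≠ 0) (hlam : lam < 1) (b : ℝ) :
    Tendsto (fun x => |c * x + b * x ^ lam|) atTop atTop := by
  have hlin : Tendsto (fun x : ℝ => |c * x|) atTop atTop := by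
    simpa only [abs_mul] using tendsto_abs_atTop_atTop.const_mul_atTop (abs_pos.2 hc)
  have hsmall : (fun x : ℝ => b * x ^ lam) =o[atTop] (fun x => c * x) :=
    ((isLittleO_rpow_id_atTop hlam).const_mul_left b).const_mul_right hc
  exact (Asymptotics.IsEquivalent.refl.add_isLittleO hsmall).isTheta.tendsto_norm_atTop_iff.2 hlin

end Growth

section LinearODE

theorem exists_eventually_eq_const_mul_of_hasDerivAt {f g H : ℝ → ℝ} {t₁ : ℝ}
    (hf : ∀ᶠ t in 𝓝[>] t₁, HasDerivAt f (H t * f t) t)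
    (hg : ∀ᶠ t in 𝓝[>] t₁, HasDerivAt g (H t * g t) t)
    (hg₀ : ∀ᶠ t in 𝓝[>] t₁, g t ≠ 0) :
    ∃ C, ∀ᶠ t in 𝓝[>] t₁, f t = C * g t := by
  obtain ⟨u, hu, hsub⟩ := mem_nhdsGT_iff_exists_Ioo_subset.1 (hf.and (hg.and hg₀))
  have hquot : ∀ t ∈ Ioo t₁ u, HasDerivAt (fun s => f s / g s) 0 t := fun t ht => by
    obtain ⟨hft, hgt, hne⟩ := hsub ht
    exact (hft.fun_div hgt hne).congr_deriv (by ring)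
  obtain ⟨C, hC⟩ := isOpen_Ioo.exists_is_const_of_deriv_eq_zero isPreconnected_Ioo
    (fun t ht => (hquot t ht).differentiableAt.differentiableWithinAt)
    (fun t ht => (hquot t ht).deriv)
  refine ⟨C, eventually_of_mem (Ioo_mem_nhdsGT hu) fun t ht => ?_⟩
  exact (div_eq_iff (hsub ht).2.2).1 (hC t ht)

end LinearODE

section GraduatedScale

/-- The scale factor of a graduated-inflation fluid `p + μ = γ μ ^ lam` as a function of its
density `x = μ`, normalised to `a₀ = 1`. -/
noncomputable def graduatedScale (γ lam x : ℝ) : ℝ :=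
  Real.exp (x ^ (1 - lam) / (3 * γ * (lam - 1)))

variable {γ lam : ℝ}

theorem graduatedScale_ne_zero (x : ℝ) : graduatedScale γ lam x ≠ 0 :=
  Real.exp_ne_zero _

theorem hasDerivAt_graduatedScale {x : ℝ} (hlam : lam ≠ 1) (hx : x ≠ 0) :
    HasDerivAt (graduatedScale γ lam)
      (-(x ^ (-lam) / (3 * γ)) * graduatedScale γ lam x) x := by
  have hlam' : lam - 1 ≠ 0 := sub_ne_zero.2 hlam
  have hexponent := ((Real.hasDerivAt_rpow_const (p := 1 - lam) (Or.inl hx)).div_const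
    (3 * γ * (lam - 1))).exp
  refine hexponent.congr_deriv ?_
  rw [sub_sub_cancel_left, graduatedScale]
  field_simp
  ring

theorem hasDerivAt_graduatedScale_comp {μ : ℝ → ℝ} {H t : ℝ} (hγ : γ ≠ 0) (hlam : lam ≠ 1)
    (hμt : 0 < μ t) (hμ : HasDerivAt μ (-(3 * H * (γ * μ t ^ lam))) t) :
    HasDerivAt (fun s => graduatedScale γ lam (μ s)) (H * graduatedScale γ lam (μ t)) t := by
  refine ((hasDerivAt_graduatedScale hlam hμt.ne').comp t hμ).congr_deriv ?_
  have hpow : μ t ^ lam ≠ 0 := (Real.rpow_pos_of_pos hμt lam).ne'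
  rw [Real.rpow_neg hμt.le]
  field_simp

theorem tendsto_rpow_mul_graduatedScale_atTop (hγ : 0 < γ) (hlam : lam < 1) (s : ℝ) :
    Tendsto (fun x => x ^ s * graduatedScale γ lam x) atTop (𝓝 0) := by
  have hl : 0 < 1 - lam := sub_pos.2 hlam
  have hexp := (tendsto_rpow_mul_exp_neg_mul_atTop_nhds_zero (s / (1 - lam))
    (1 / (3 * γ * (1 - lam))) (by positivity)).comp (tendsto_rpow_atTop hl)
  refine hexp.congr' ?_
  filter_upwards [eventually_ge_atTop 0] with x hx
  rw [Function.comp_apply, ← Real.rpow_mul hx, mul_div_cancel₀ _ hl.ne', graduatedScale,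
    ← neg_sub 1 lam, mul_neg, div_neg, neg_mul, one_div_mul_eq_div]

theorem tendsto_graduatedScale_atTop (hγ : 0 < γ) (hlam : lam < 1) :
    Tendsto (graduatedScale γ lam) atTop (𝓝 0) := by
  simpa only [Real.rpow_zero, one_mul] using tendsto_rpow_mul_graduatedScale_atTop hγ hlam 0

theorem tendsto_mul_graduatedScale_sq_atTop (hγ : 0 < γ) (hlam : lam < 1) :
    Tendsto (fun x => x * graduatedScale γ lam x ^ 2) atTop (𝓝 0) := by
  simpa only [Real.rpow_one, mul_assoc, ← pow_two, zero_pow two_ne_zero] using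
    (tendsto_rpow_mul_graduatedScale_atTop hγ hlam 1).mul (tendsto_graduatedScale_atTop hγ hlam)

end GraduatedScale

section Friedmann

variable {α : Type*} {l : Filter α} {H a μ : α → ℝ} {k : ℝ}

theorem curvature_nonpos_of_tendsto_mul_sq [l.NeBot] (ha : ∀ᶠ t in l, a t ≠ 0)
    (hFried : ∀ᶠ t in l, H t ^ 2 = μ t / 3 - k / a t ^ 2)
    (hlim : Tendsto (fun t => μ t * a t ^ 2) l (𝓝 0)) : k ≤ 0 := by
  refine le_of_tendsto_of_tendsto tendsto_const_nhds (by simpa using hlim.div_const 3) ?_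
  filter_upwards [ha, hFried] with t hat hF
  have hk : k = μ t * a t ^ 2 / 3 - (a t * H t) ^ 2 := by
    rw [mul_pow, hF]
    field_simp
    ring
  exact hk.trans_le (sub_le_self _ (sq_nonneg _))

theorem tendsto_abs_hubble_atTop (hk : k ≤ 0)
    (hFried : ∀ᶠ t in l, H t ^ 2 = μ t / 3 - k / a t ^ 2) (hμ : Tendsto μ l atTop) :
    Tendsto (fun t => |H t|) l atTop := by
  refine tendsto_atTop_mono' l ?_
    (Real.tendsto_sqrt_atTop.comp (hμ.atTop_div_const (by norm_num : (0 : ℝ) < 3)))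
  filter_upwards [hFried] with t hF
  have hcurv : k / a t ^ 2 ≤ 0 := div_nonpos_of_nonpos_of_nonneg hk (sq_nonneg _)
  exact Real.sqrt_le_iff.2 ⟨abs_nonneg _, by rw [sq_abs, hF]; linarith⟩

end Friedmann

theorem exists_scaleFactor_eq_const_mul_graduatedScale {t₁ γ lam : ℝ} {a μ : ℝ → ℝ}
    (hγ : γ ≠ 0) (hlam : lam ≠ 1)
    (ha : ∀ᶠ t in 𝓝[>] t₁, DifferentiableAt ℝ a t)
    (hμ : ∀ᶠ t in 𝓝[>] t₁, DifferentiableAt ℝ μ t)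
    (ha₀ : ∀ᶠ t in 𝓝[>] t₁, a t ≠ 0) (hμpos : ∀ᶠ t in 𝓝[>] t₁, 0 < μ t)
    (hcont : ∀ᶠ t in 𝓝[>] t₁, deriv μ t + 3 * (deriv a t / a t) * (γ * μ t ^ lam) = 0) :
    ∃ C, ∀ᶠ t in 𝓝[>] t₁, a t = C * graduatedScale γ lam (μ t) := by
  refine exists_eventually_eq_const_mul_of_hasDerivAt (H := fun t => deriv a t / a t) ?_ ?_
    (.of_forall fun t => graduatedScale_ne_zero (μ t))
  · filter_upwards [ha, ha₀] with t hat hne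
    simpa only [div_mul_cancel₀ _ hne] using hat.hasDerivAt
  · filter_upwards [hμ, hμpos, hcont] with t hμt hpos hc
    exact hasDerivAt_graduatedScale_comp hγ hlam hpos
      (hμt.hasDerivAt.congr_deriv (eq_neg_of_add_eq_zero_left hc))

theorem graduated_inflation_past_collapse_general {t₁ γ lam k : ℝ} {a μ : ℝ → ℝ}
    (hγ : 0 < γ) (hlam : lam < 1)
    (ha : ∀ᶠ t in 𝓝[>] t₁, DifferentiableAt ℝ a t)
    (hμ : ∀ᶠ t in 𝓝[>] t₁, DifferentiableAt ℝ μ t)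
    (ha₀ : ∀ᶠ t in 𝓝[>] t₁, a t ≠ 0)
    (hcont : ∀ᶠ t in 𝓝[>] t₁, deriv μ t + 3 * (deriv a t / a t) * (γ * μ t ^ lam) = 0)
    (hFried : ∀ᶠ t in 𝓝[>] t₁, (deriv a t / a t) ^ 2 = μ t / 3 - k / a t ^ 2) :
    Tendsto μ (𝓝[>] t₁) atTop ↔
      (Tendsto a (𝓝[>] t₁) (𝓝 0) ∧
       Tendsto (fun t => |deriv a t / a t|) (𝓝[>] t₁) atTop ∧
       Tendsto (fun t => |-2 * μ t + 3 * γ * μ t ^ lam| / (2 * √3)) (𝓝[>] t₁) atTop ∧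
       Tendsto (fun t => μ t / √3) (𝓝[>] t₁) atTop) := by
  have hD : Tendsto (fun t => μ t / √3) (𝓝[>] t₁) atTop ↔ Tendsto μ (𝓝[>] t₁) atTop :=
    tendsto_div_const_atTop_of_pos (by positivity)
  refine ⟨fun h => ?_, fun h => hD.1 h.2.2.2⟩
  obtain ⟨C, hC⟩ := exists_scaleFactor_eq_const_mul_graduatedScale hγ.ne' hlam.ne ha hμ ha₀
    (h.eventually_gt_atTop 0) hcont
  have ha_lim : Tendsto a (𝓝[>] t₁) (𝓝 0) := by
    simpa only [mul_zero] using (((tendsto_graduatedScale_atTop hγ hlam).comp h).const_mul C).congr'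
      (EventuallyEq.symm hC)
  have hμa_lim : Tendsto (fun t => μ t * a t ^ 2) (𝓝[>] t₁) (𝓝 0) := by
    rw [← mul_zero (C ^ 2)]
    refine (((tendsto_mul_graduatedScale_sq_atTop hγ hlam).comp h).const_mul (C ^ 2)).congr' ?_
    filter_upwards [hC] with t ht
    rw [ht, Function.comp_apply]
    ring
  have hk : k ≤ 0 := curvature_nonpos_of_tendsto_mul_sq ha₀ hFried hμa_lim
  have hE := (tendsto_abs_mul_add_mul_rpow_atTop (c := -2) (by norm_num) hlam (3 * γ)).comp h
  exact ⟨ha_lim, tendsto_abs_hubble_atTop hk hFried h, hE.atTop_div_const (by positivity), hD.2 h⟩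

/-- In an open or flat (`k = 0` or `k = −1`) FRW universe filled
with a fluid with equation of state `p + μ = γμ^λ` (`γ > 0`, `λ < 1`), i.e.
satisfying `μ′ + 3H·γμ^λ = 0` and `H² = μ/3 − k/a²` on `(t₁,t₂)`,
`μ → ∞` as `t → t₁⁺` iff `a → 0`, `|H| → ∞`,
`|E| = |−2μ + 3γμ^λ|/(2√3) → ∞` and `|D| = μ/√3 → ∞` as `t → t₁⁺`
(past-collapse singularity of type `(S₁,N₁,B₁)`). -/
theorem graduated_inflation_past_collapse
    (t₁ t₂ γ lam k : ℝ) (hlt : t₁ < t₂) (hγ : 0 < γ) (hlam : lam < 1)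
    (hk : k = 0 ∨ k = -1) (a μ : ℝ → ℝ)
    (ha : ∀ t ∈ Set.Ioo t₁ t₂, DifferentiableAt ℝ a t)
    (hμ : ∀ t ∈ Set.Ioo t₁ t₂, DifferentiableAt ℝ μ t)
    (hapos : ∀ t ∈ Set.Ioo t₁ t₂, 0 < a t)
    (hμpos : ∀ t ∈ Set.Ioo t₁ t₂, 0 < μ t)
    (hcont : ∀ t ∈ Set.Ioo t₁ t₂,
      deriv μ t + 3 * (deriv a t / a t) * (γ * μ t ^ lam) = 0)
    (hFried : ∀ t ∈ Set.Ioo t₁ t₂,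
      (deriv a t / a t) ^ 2 = μ t / 3 - k / (a t) ^ 2) :
    Tendsto μ (𝓝[>] t₁) atTop ↔
      (Tendsto a (𝓝[>] t₁) (𝓝 0) ∧
       Tendsto (fun t => |deriv a t / a t|) (𝓝[>] t₁) atTop ∧
       Tendsto (fun t => |-2 * μ t + 3 * γ * μ t ^ lam| / (2 * Real.sqrt 3))
         (𝓝[>] t₁) atTop ∧
       Tendsto (fun t => μ t / Real.sqrt 3) (𝓝[>] t₁) atTop) := by
  have hnear {P : ℝ → Prop} (h : ∀ t ∈ Ioo t₁ t₂, P t) : ∀ᶠ t in 𝓝[>] t₁, P t :=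
    eventually_of_mem (Ioo_mem_nhdsGT hlt) h
  exact graduated_inflation_past_collapse_general hγ hlam (hnear ha) (hnear hμ)
    (hnear fun t ht => (hapos t ht).ne') (hnear hcont) (hnear hFried)
end

section
/- Let t₁ < t₀, let C > 0, γ > 0, μ₀ > 0 and k ∈ ℝ, and let a, μ : (t₁,t₀) → ℝ be differentiable with a(t) > 0 and 0 < μ(t) < μ₀, satisfying the continuity equation μ′ = 3(a′/a)·C·(μ₀−μ)^{−γ} (fluid with equation of state p + μ = −C(μ₀−μ)^{−γ}) and the Friedmann equation (a′/a)² = μ/3 − k/a². Then μ(t) → μ₀ as t → t₀⁻ if and only if, as t → t₀⁻: a(t) tends to a finite positive limit, a′(t)/a(t) tends to a finite limit, |D|(t) = μ(t)/√3 tends to a finite limit, and |E|(t) = |2μ + 3C(μ₀−μ)^{−γ}|/(2√3) → ∞ (sudden singularity of type (S₃,N₂,B₃)). -/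
open Filter Topology Set

/-!
Integrating the continuity equation shows that `a * exp ((μ₀ - μ) ^ (γ + 1) / (3 * C * (γ + 1)))` is
constant, so `μ → μ₀` forces `a` to converge to a nonzero limit, and then the Friedmann equation
forces `H ^ 2` to converge. No continuity of `H` is assumed, but `H` is the derivative of `log a`,
so by Darboux's theorem it cannot jump between the two square roots of a nonzero limit; hence `H`
converges. Conversely, if `μ` converges to a value other than `μ₀`, then `|E|` stays bounded.
-/

theorem eventually_neg_or_eventually_pos_of_hasDerivAt {f f' : ℝ → ℝ} {b : ℝ}
    (hf : ∀ᶠ x in 𝓝[<] b, HasDerivAt f (f' x) x) (hne : ∀ᶠ x in 𝓝[<] b, f' x ≠ 0) :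
    (∀ᶠ x in 𝓝[<] b, f' x < 0) ∨ ∀ᶠ x in 𝓝[<] b, 0 < f' x := by
  obtain ⟨c, hcb, hc⟩ := mem_nhdsLT_iff_exists_Ioo_subset.1 (hf.and hne)
  have hmem : Ioo c b ∈ 𝓝[<] b := Ioo_mem_nhdsLT hcb
  exact (hasDerivWithinAt_forall_lt_or_forall_gt_of_forall_ne (convex_Ioo c b)
    (fun x hx => (hc hx).1.hasDerivWithinAt) (fun x hx => (hc hx).2)).imp
    (eventually_of_mem hmem) (eventually_of_mem hmem)

theorem tendsto_or_tendsto_neg_of_hasDerivAt_of_tendsto_abs {f f' : ℝ → ℝ} {b L : ℝ}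
    (hf : ∀ᶠ x in 𝓝[<] b, HasDerivAt f (f' x) x)
    (habs : Tendsto (fun x => |f' x|) (𝓝[<] b) (𝓝 L)) :
    Tendsto f' (𝓝[<] b) (𝓝 L) ∨ Tendsto f' (𝓝[<] b) (𝓝 (-L)) := by
  rcases eq_or_ne L 0 with rfl | hL
  · exact .inl ((tendsto_zero_iff_abs_tendsto_zero f').2 habs)
  · have hne : ∀ᶠ x in 𝓝[<] b, f' x ≠ 0 := (habs.eventually_ne hL).mono fun _ => abs_ne_zero.1
    rcases eventually_neg_or_eventually_pos_of_hasDerivAt hf hne with hneg | hpos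
    · exact .inr (habs.neg.congr' (hneg.mono fun x hx => by rw [abs_of_neg hx, neg_neg]))
    · exact .inl (habs.congr' (hpos.mono fun _ => abs_of_pos))

theorem tendsto_abs_add_mul_rpow_neg_atTop_iff {α : Type*} {l : Filter α} [l.NeBot]
    {g u : α → ℝ} {b c m u₀ γ : ℝ} (hc : c ≠ 0) (hγ : 0 < γ) (hg : Tendsto g l (𝓝 b))
    (hu : Tendsto u l (𝓝 m)) (hlt : ∀ᶠ x in l, u x < u₀) :
    Tendsto (fun x => |g x + c * (u₀ - u x) ^ (-γ)|) l atTop ↔ m = u₀ := by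
  have hsub : Tendsto (fun x => u₀ - u x) l (𝓝 (u₀ - m)) := hu.const_sub u₀
  constructor
  · intro htop
    by_contra hne
    have hpow := hsub.rpow_const (p := -γ) (.inl (sub_ne_zero.2 (Ne.symm hne)))
    exact not_tendsto_nhds_of_tendsto_atTop htop _ (hg.add (hpow.const_mul c)).abs
  · rintro rfl
    have hpos : ∀ᶠ x in l, 0 < m - u x := hlt.mono fun _ => sub_pos.2
    have hsub₀ : Tendsto (fun x => m - u x) l (𝓝[>] 0) :=
      tendsto_nhdsWithin_iff.2 ⟨by simpa using hsub, hpos⟩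
    have hpow : Tendsto (fun x => (m - u x) ^ (-γ)) l atTop :=
      (tendsto_rpow_neg_nhdsGT_zero (neg_lt_zero.2 hγ)).comp hsub₀
    refine tendsto_atTop_mono' l ?_
      ((hpow.const_mul_atTop (abs_pos.2 hc)).atTop_add hg.abs.neg)
    filter_upwards [hpos] with x hx
    calc |c| * (m - u x) ^ (-γ) + -|g x|
        = |c * (m - u x) ^ (-γ)| - |g x| := by
          rw [abs_mul, abs_of_pos (Real.rpow_pos_of_pos hx _), ← sub_eq_add_neg]
      _ ≤ |g x + c * (m - u x) ^ (-γ)| := by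
          rw [sub_le_iff_le_add']
          exact abs_add' _ _

section ScaleFactor

variable {a H μ : ℝ → ℝ} {C γ μ₀ : ℝ}

theorem hasDerivAt_mul_exp_of_continuity_equation {t : ℝ} (hC : C ≠ 0) (hγ : γ + 1 ≠ 0)
    (hlt : μ t < μ₀) (ha : HasDerivAt a (H t * a t) t)
    (hμ : HasDerivAt μ (3 * H t * C * (μ₀ - μ t) ^ (-γ)) t) :
    HasDerivAt (fun s => a s * Real.exp ((μ₀ - μ s) ^ (γ + 1) / (3 * C * (γ + 1)))) 0 t := by
  have hx : 0 < μ₀ - μ t := sub_pos.2 hlt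
  have hcancel : (μ₀ - μ t) ^ (-γ) * (μ₀ - μ t) ^ γ = 1 := by
    rw [← Real.rpow_add hx, neg_add_cancel, Real.rpow_zero]
  have hexponent : HasDerivAt (fun s => (μ₀ - μ s) ^ (γ + 1) / (3 * C * (γ + 1))) (-H t) t := by
    refine (((hμ.const_sub μ₀).rpow_const (p := γ + 1) (.inl hx.ne')).div_const _).congr_deriv ?_
    rw [add_sub_cancel_right]
    field_simp
    linear_combination -H t * hcancel
  exact (ha.mul hexponent.exp).congr_deriv (by ring)

theorem exists_eq_mul_exp_of_continuity_equation {s : Set ℝ} (hs : IsOpen s)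
    (hs' : IsPreconnected s) (hC : C ≠ 0) (hγ : γ + 1 ≠ 0) (hlt : ∀ t ∈ s, μ t < μ₀)
    (ha : ∀ t ∈ s, HasDerivAt a (H t * a t) t)
    (hμ : ∀ t ∈ s, HasDerivAt μ (3 * H t * C * (μ₀ - μ t) ^ (-γ)) t) :
    ∃ A, ∀ t ∈ s, a t = A * Real.exp (-((μ₀ - μ t) ^ (γ + 1) / (3 * C * (γ + 1)))) := by
  have hderiv := fun t ht =>
    hasDerivAt_mul_exp_of_continuity_equation hC hγ (hlt t ht) (ha t ht) (hμ t ht)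
  obtain ⟨A, hA⟩ := hs.exists_is_const_of_deriv_eq_zero hs'
    (fun t ht => (hderiv t ht).differentiableAt.differentiableWithinAt)
    (fun t ht => (hderiv t ht).deriv)
  refine ⟨A, fun t ht => ?_⟩
  rw [← hA t ht, mul_assoc, ← Real.exp_add, add_neg_cancel, Real.exp_zero, mul_one]

theorem exists_pos_tendsto_scale_factor {t₁ t₀ : ℝ} (h₁₀ : t₁ < t₀) (hC : C ≠ 0)
    (hγ : 0 < γ + 1) (hapos : ∀ t ∈ Ioo t₁ t₀, 0 < a t)
    (hlt : ∀ t ∈ Ioo t₁ t₀, μ t < μ₀)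
    (ha : ∀ t ∈ Ioo t₁ t₀, HasDerivAt a (H t * a t) t)
    (hμ : ∀ t ∈ Ioo t₁ t₀, HasDerivAt μ (3 * H t * C * (μ₀ - μ t) ^ (-γ)) t)
    (hlim : Tendsto μ (𝓝[<] t₀) (𝓝 μ₀)) :
    ∃ A, 0 < A ∧ Tendsto a (𝓝[<] t₀) (𝓝 A) := by
  obtain ⟨A, hA⟩ :=
    exists_eq_mul_exp_of_continuity_equation isOpen_Ioo isPreconnected_Ioo hC hγ.ne' hlt ha hμ
  have hApos : 0 < A := by
    obtain ⟨t, ht⟩ := nonempty_Ioo.2 h₁₀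
    exact pos_of_mul_pos_left (hA t ht ▸ hapos t ht) (Real.exp_pos _).le
  have hpow : Tendsto (fun t => (μ₀ - μ t) ^ (γ + 1)) (𝓝[<] t₀) (𝓝 0) := by
    simpa [Real.zero_rpow hγ.ne'] using
      (hlim.const_sub μ₀).rpow_const (p := γ + 1) (.inr hγ.le)
  have hexp : Tendsto (fun t => A * Real.exp (-((μ₀ - μ t) ^ (γ + 1) / (3 * C * (γ + 1)))))
      (𝓝[<] t₀) (𝓝 A) := by
    simpa using (hpow.div_const (3 * C * (γ + 1))).neg.rexp.const_mul A
  exact ⟨A, hApos,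
    hexp.congr' (eventually_of_mem (Ioo_mem_nhdsLT h₁₀) fun t ht => (hA t ht).symm)⟩

end ScaleFactor

theorem tendsto_abs_hubble_of_friedmann {α : Type*} {l : Filter α} {a H μ : α → ℝ} {A k m : ℝ}
    (hA : A ≠ 0) (ha : Tendsto a l (𝓝 A)) (hμ : Tendsto μ l (𝓝 m))
    (hFried : ∀ᶠ t in l, H t ^ 2 = μ t / 3 - k / a t ^ 2) :
    Tendsto (fun t => |H t|) l (𝓝 √(m / 3 - k / A ^ 2)) := by
  have hsq : Tendsto (fun t => H t ^ 2) l (𝓝 (m / 3 - k / A ^ 2)) :=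
    ((hμ.div_const 3).sub (tendsto_const_nhds.div (ha.pow 2) (pow_ne_zero 2 hA))).congr'
      (hFried.mono fun _ => Eq.symm)
  exact hsq.sqrt.congr fun t => Real.sqrt_sq_eq_abs (H t)

theorem sudden_singularity_general {t₁ t₀ C γ μ₀ k : ℝ} (hlt : t₁ < t₀) (hC : C ≠ 0) (hγ : 0 < γ)
    {a μ : ℝ → ℝ}
    (ha : ∀ t ∈ Ioo t₁ t₀, DifferentiableAt ℝ a t)
    (hμ : ∀ t ∈ Ioo t₁ t₀, DifferentiableAt ℝ μ t)
    (hapos : ∀ t ∈ Ioo t₁ t₀, 0 < a t)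
    (hμlt : ∀ t ∈ Ioo t₁ t₀, μ t < μ₀)
    (hcont : ∀ t ∈ Ioo t₁ t₀, deriv μ t = 3 * (deriv a t / a t) * C * (μ₀ - μ t) ^ (-γ))
    (hFried : ∀ t ∈ Ioo t₁ t₀, (deriv a t / a t) ^ 2 = μ t / 3 - k / a t ^ 2) :
    Tendsto μ (𝓝[<] t₀) (𝓝 μ₀) ↔
      ((∃ a_s : ℝ, 0 < a_s ∧ Tendsto a (𝓝[<] t₀) (𝓝 a_s)) ∧
       (∃ L : ℝ, Tendsto (fun t => deriv a t / a t) (𝓝[<] t₀) (𝓝 L)) ∧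
       (∃ d : ℝ, Tendsto (fun t => μ t / √3) (𝓝[<] t₀) (𝓝 d)) ∧
       Tendsto (fun t => |2 * μ t + 3 * C * (μ₀ - μ t) ^ (-γ)| / (2 * √3)) (𝓝[<] t₀) atTop) := by
  have hmem : Ioo t₁ t₀ ∈ 𝓝[<] t₀ := Ioo_mem_nhdsLT hlt
  have hE_iff {m : ℝ} (hm : Tendsto μ (𝓝[<] t₀) (𝓝 m)) :
      Tendsto (fun t => |2 * μ t + 3 * C * (μ₀ - μ t) ^ (-γ)| / (2 * √3)) (𝓝[<] t₀) atTop ↔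
        m = μ₀ :=
    (tendsto_div_const_atTop_of_pos (by positivity)).trans
      (tendsto_abs_add_mul_rpow_neg_atTop_iff (mul_ne_zero three_ne_zero hC) hγ (hm.const_mul 2) hm
        (eventually_of_mem hmem hμlt))
  constructor
  · intro hlim
    obtain ⟨A, hApos, hA⟩ := exists_pos_tendsto_scale_factor (H := fun t => deriv a t / a t) hlt hC
      (by positivity) hapos hμlt
      (fun t ht => by simpa [(hapos t ht).ne'] using (ha t ht).hasDerivAt)
      (fun t ht => hcont t ht ▸ (hμ t ht).hasDerivAt) hlim
    have hlog : ∀ᶠ t in 𝓝[<] t₀, HasDerivAt (fun s => Real.log (a s)) (deriv a t / a t) t :=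
      eventually_of_mem hmem fun t ht => (ha t ht).hasDerivAt.log (hapos t ht).ne'
    have hH := tendsto_or_tendsto_neg_of_hasDerivAt_of_tendsto_abs hlog
      (tendsto_abs_hubble_of_friedmann hApos.ne' hA hlim (eventually_of_mem hmem hFried))
    exact ⟨⟨A, hApos, hA⟩, hH.elim (⟨_, ·⟩) (⟨_, ·⟩), ⟨_, hlim.div_const √3⟩, (hE_iff hlim).2 rfl⟩
  · rintro ⟨-, -, ⟨d, hd⟩, hE⟩
    have hm : Tendsto μ (𝓝[<] t₀) (𝓝 (d * √3)) := by
      simpa using hd.mul_const √3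
    exact (hE_iff hm).1 hE ▸ hm

/-- In an FRW universe filled with a fluid with equation of state
`p + μ = −C(μ₀−μ)^{−γ}` (so `μ′ = 3H·C(μ₀−μ)^{−γ}`, `H² = μ/3 − k/a²` on
`(t₁,t₀)`, with `0 < μ < μ₀`), `μ → μ₀` as `t → t₀⁻` iff, as `t → t₀⁻`:
`a` tends to a finite positive limit, `H = a′/a` tends to a finite limit,
`|D| = μ/√3` tends to a finite limit, and
`|E| = |2μ + 3C(μ₀−μ)^{−γ}|/(2√3) → ∞`
(sudden singularity of type `(S₃,N₂,B₃)`). -/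
theorem sudden_singularity
    (t₁ t₀ C γ μ₀ k : ℝ) (hlt : t₁ < t₀) (hC : 0 < C) (hγ : 0 < γ) (hμ₀ : 0 < μ₀)
    (a μ : ℝ → ℝ)
    (ha : ∀ t ∈ Set.Ioo t₁ t₀, DifferentiableAt ℝ a t)
    (hμ : ∀ t ∈ Set.Ioo t₁ t₀, DifferentiableAt ℝ μ t)
    (hapos : ∀ t ∈ Set.Ioo t₁ t₀, 0 < a t)
    (hμpos : ∀ t ∈ Set.Ioo t₁ t₀, 0 < μ t)
    (hμlt : ∀ t ∈ Set.Ioo t₁ t₀, μ t < μ₀)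
    (hcont : ∀ t ∈ Set.Ioo t₁ t₀,
      deriv μ t = 3 * (deriv a t / a t) * C * (μ₀ - μ t) ^ (-γ))
    (hFried : ∀ t ∈ Set.Ioo t₁ t₀,
      (deriv a t / a t) ^ 2 = μ t / 3 - k / (a t) ^ 2) :
    Tendsto μ (𝓝[<] t₀) (𝓝 μ₀) ↔
      ((∃ a_s : ℝ, 0 < a_s ∧ Tendsto a (𝓝[<] t₀) (𝓝 a_s)) ∧
       (∃ L : ℝ, Tendsto (fun t => deriv a t / a t) (𝓝[<] t₀) (𝓝 L)) ∧
       (∃ d : ℝ, Tendsto (fun t => μ t / Real.sqrt 3) (𝓝[<] t₀) (𝓝 d)) ∧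
       Tendsto (fun t => |2 * μ t + 3 * C * (μ₀ - μ t) ^ (-γ)| / (2 * Real.sqrt 3))
         (𝓝[<] t₀) atTop) :=
  sudden_singularity_general hlt hC.ne' hγ ha hμ hapos hμlt hcont hFried
end

section
/- Let t_i < t_s and let a : [t_i,t_s] → ℝ be differentiable with a(t) > 0 for all t. Define the affine parameter λ(t) = ∫_{t_i}^{t} a(u)/a(t_s) du and H = a′/a. Then ∫_{t_i}^{t_s} H(t)·(a(t)/a(t_s)) dt = 1 − a(t_i)/a(t_s) < 1. Consequently, if the averaged Hubble rate H_av = (1/(λ(t_s) − λ(t_i)))·∫_{t_i}^{t_s} H(t)·(a(t)/a(t_s)) dt is positive, then λ(t_s) − λ(t_i) < 1/H_av, i.e. the affine length of the corresponding past-directed null geodesic is finite and bounded by 1/H_av. -/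
open Filter Topology Set MeasureTheory intervalIntegral

/-!
The measure `dλ = (a / a t_s) dt` cancels the denominator of `H = a′ / a`, so `H dλ = d(a / a t_s)`
is exact. Its integral `1 - a t_i / a t_s` counts the expansion in units of the final scale factor
and stays below `1` as long as `a t_i > 0`; dividing by the affine length gives `H_av · Δλ < 1`.
-/

section FundamentalTheorem

theorem absolutelyContinuousOnInterval_congr {X : Type*} [PseudoMetricSpace X] {f g : ℝ → X}
    {a b : ℝ} (hf : AbsolutelyContinuousOnInterval f a b) (hfg : EqOn f g (uIcc a b)) :
    AbsolutelyContinuousOnInterval g a b :=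
  Tendsto.congr' (mem_inf_of_right fun _E hE ↦ Finset.sum_congr rfl fun i hi ↦ by
    rw [hfg (hE.1 i hi).1, hfg (hE.1 i hi).2]) hf

variable {f : ℝ → ℝ} {a b : ℝ}

theorem absolutelyContinuousOnInterval_of_intervalIntegrable_deriv
    (hcont : ContinuousOn f (uIcc a b)) (hdiff : ∀ t ∈ uIoo a b, DifferentiableAt ℝ f t)
    (hint : IntervalIntegrable (deriv f) volume a b) : AbsolutelyContinuousOnInterval f a b := by
  have primitive_ac : AbsolutelyContinuousOnInterval (fun t ↦ ∫ u in a..t, deriv f u) a b :=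
    hint.absolutelyContinuousOnInterval_intervalIntegral left_mem_uIcc
  have const_ac : AbsolutelyContinuousOnInterval (fun _ ↦ f a) a b :=
    contDiffOn_const.absolutelyContinuousOnInterval
  refine absolutelyContinuousOnInterval_congr (primitive_ac.add const_ac) fun t ht ↦ ?_
  have hsub : uIcc a t ⊆ uIcc a b := uIcc_subset_uIcc_left ht
  have hsub_interior : uIoo a t ⊆ uIoo a b := uIoo_subset_Ioo left_mem_uIcc ht
  simp only [Pi.add_apply]
  rw [integral_deriv_eq_sub_uIoo (hcont.mono hsub) (fun u hu ↦ hdiff u (hsub_interior hu))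
    (hint.mono_set hsub), sub_add_cancel]

theorem integral_logDeriv_mul_div_const (hf : AbsolutelyContinuousOnInterval f a b)
    (hne : ∀ t ∈ uIoo a b, f t ≠ 0) (c : ℝ) :
    ∫ t in a..b, logDeriv f t * (f t / c) = (f b - f a) / c :=
  calc
    ∫ t in a..b, logDeriv f t * (f t / c) = ∫ t in a..b, deriv f t / c :=
      integral_congr_uIoo fun t ht ↦ by
        simp only [logDeriv_apply, div_mul_div_cancel₀ (hne t ht)]
    _ = (f b - f a) / c := by rw [intervalIntegral.integral_div, hf.integral_deriv_eq_sub]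

end FundamentalTheorem

section AffineParameter

/-- The affine parameter along a past-directed radial null geodesic, vanishing at `t_i` and
normalised by `dλ/dt = 1` at `t_s`. -/
noncomputable def affineParameter (a : ℝ → ℝ) (t_i t_s t : ℝ) : ℝ :=
  ∫ u in t_i..t, a u / a t_s

/-- The averaged Hubble rate `H_av` of Borde, Guth and Vilenkin: the mean of `H` over `[t_i, t_s]`
with respect to `affineParameter`. The Hubble rate `H = a′ / a` is encoded as `logDeriv a`. -/
noncomputable def averagedHubble (a : ℝ → ℝ) (t_i t_s : ℝ) : ℝ :=
  (∫ t in t_i..t_s, logDeriv a t * (a t / a t_s)) /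
    (affineParameter a t_i t_s t_s - affineParameter a t_i t_s t_i)

variable {a : ℝ → ℝ} {t_i t_s : ℝ}

theorem strictMonoOn_affineParameter (hcont : ContinuousOn a (Icc t_i t_s))
    (hpos : ∀ t ∈ Icc t_i t_s, 0 < a t) :
    StrictMonoOn (affineParameter a t_i t_s) (Icc t_i t_s) := by
  intro x hx y hy hxy
  have integrable {u v : ℝ} (hu : u ∈ Icc t_i t_s) (hv : v ∈ Icc t_i t_s) :
      IntervalIntegrable (fun t ↦ a t / a t_s) volume u v :=
    ((hcont.mono (uIcc_subset_Icc hu hv)).div_const _).intervalIntegrable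
  have hi : t_i ∈ Icc t_i t_s := left_mem_Icc.2 (hx.1.trans hx.2)
  have hs : t_s ∈ Icc t_i t_s := right_mem_Icc.2 (hx.1.trans hx.2)
  rw [← sub_pos]
  calc
    0 < ∫ t in x..y, a t / a t_s :=
      intervalIntegral_pos_of_pos_on (integrable hx hy)
        (fun t ht ↦ div_pos (hpos t ⟨hx.1.trans ht.1.le, ht.2.le.trans hy.2⟩) (hpos t_s hs)) hxy
    _ = affineParameter a t_i t_s y - affineParameter a t_i t_s x :=
      (integral_interval_sub_left (integrable hi hy) (integrable hi hx)).symm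

end AffineParameter

theorem averaged_hubble_incompleteness_general {t_i t_s : ℝ} (hlt : t_i < t_s) {a : ℝ → ℝ}
    (hac : AbsolutelyContinuousOnInterval a t_i t_s) (hapos : ∀ t ∈ Icc t_i t_s, 0 < a t) :
    (∫ t in t_i..t_s, logDeriv a t * (a t / a t_s)) = 1 - a t_i / a t_s ∧
      1 - a t_i / a t_s < 1 ∧
      (0 < averagedHubble a t_i t_s →
        affineParameter a t_i t_s t_s - affineParameter a t_i t_s t_i <
          1 / averagedHubble a t_i t_s) := by
  have hi : t_i ∈ Icc t_i t_s := left_mem_Icc.2 hlt.le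
  have hs : t_s ∈ Icc t_i t_s := right_mem_Icc.2 hlt.le
  have hubble_integral :
      (∫ t in t_i..t_s, logDeriv a t * (a t / a t_s)) = 1 - a t_i / a t_s := by
    rw [integral_logDeriv_mul_div_const hac fun t ht ↦
      (hapos t (Ioo_subset_Icc_self (uIoo_of_le hlt.le ▸ ht))).ne', sub_div,
      div_self (hapos t_s hs).ne']
  have lt_one : 1 - a t_i / a t_s < 1 := sub_lt_self 1 (div_pos (hapos t_i hi) (hapos t_s hs))
  have length_pos : 0 < affineParameter a t_i t_s t_s - affineParameter a t_i t_s t_i :=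
    sub_pos.2 (strictMonoOn_affineParameter (uIcc_of_le hlt.le ▸ hac.continuousOn) hapos hi hs hlt)
  refine ⟨hubble_integral, lt_one, fun hav_pos ↦ ?_⟩
  rw [lt_one_div length_pos hav_pos, averagedHubble, hubble_integral]
  exact div_lt_div_of_pos_right lt_one length_pos

/-- For a differentiable `a > 0` on `[t_i,t_s]`, with affine
parameter `λ(t) = ∫_{t_i}^{t} a(u)/a(t_s) du` and `H = a′/a`, one has
`∫_{t_i}^{t_s} H·(a/a(t_s)) = 1 − a(t_i)/a(t_s) < 1`; hence if the averaged
Hubble rate `H_av = (∫ H·(a/a(t_s)))/(λ(t_s) − λ(t_i))` is positive, then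
`λ(t_s) − λ(t_i) < 1/H_av`: the affine length of the past-directed null
geodesic is finite and bounded by `1/H_av`. -/
theorem averaged_hubble_incompleteness
    (t_i t_s : ℝ) (hlt : t_i < t_s) (a : ℝ → ℝ)
    (ha : ∀ t ∈ Set.Icc t_i t_s, DifferentiableAt ℝ a t)
    (hapos : ∀ t ∈ Set.Icc t_i t_s, 0 < a t)
    (hint : IntervalIntegrable (deriv a) MeasureTheory.volume t_i t_s) :
    ∀ lam : ℝ → ℝ, (∀ t, lam t = ∫ u in t_i..t, a u / a t_s) →
      (∫ t in t_i..t_s, (deriv a t / a t) * (a t / a t_s)) = 1 - a t_i / a t_s ∧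
      1 - a t_i / a t_s < 1 ∧
      (∀ Hav : ℝ,
        Hav = (∫ t in t_i..t_s, (deriv a t / a t) * (a t / a t_s)) /
                (lam t_s - lam t_i) →
        0 < Hav → lam t_s - lam t_i < 1 / Hav) := by
  intro lam hlam
  obtain rfl : lam = affineParameter a t_i t_s := funext hlam
  have hdiff : ∀ t ∈ uIcc t_i t_s, DifferentiableAt ℝ a t := uIcc_of_le hlt.le ▸ ha
  have hac : AbsolutelyContinuousOnInterval a t_i t_s :=
    absolutelyContinuousOnInterval_of_intervalIntegrable_deriv
      (fun t ht ↦ (hdiff t ht).continuousAt.continuousWithinAt)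
      (fun t ht ↦ hdiff t (uIoo_subset_uIcc_self ht)) hint
  obtain ⟨hubble_integral, lt_one, length_lt⟩ :=
    averaged_hubble_incompleteness_general hlt hac hapos
  exact ⟨hubble_integral, lt_one, by rintro _ rfl; exact length_lt⟩
end

section
/- Let w < −1, A > 0, a₀ > 0 and t₀ ∈ ℝ. Set X(t) = a₀^{3(1+w)/2} + (3(1+w)√A/2)·(t − t₀) and t_rip = t₀ + 2·a₀^{3(1+w)/2}/(3√A·(−1−w)). Then X(t) > 0 on [t₀, t_rip) with X(t_rip) = 0, and the function a(t) = X(t)^{2/(3(1+w))} on (t₀, t_rip) satisfies the Friedmann equation (a′(t)/a(t))² = A·a(t)^{−3(w+1)} for all t, and a(t) → ∞ as t → t_rip⁻, while a′(t)/a(t) = √A·X(t)^{−1} → +∞ as t → t_rip⁻. Thus a flat phantom FRW universe reaches a big-rip singularity at the finite time t_rip, which decreases as a₀ and |w| increase. -/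
open Filter Topology Set Real

/-!
With `k = 3 (1 + w) / 2` and `s = √A`, the expanding branch of the Friedmann equation is
`a' / a = s a ^ (-k)`, which says that `X = a ^ k` has constant derivative `k s`. For phantom energy
`k s < 0`, so the affine function `X` decreases to zero in finite time, where `a = X ^ (1 / k)` and
`a' / a = s / X` both blow up.
-/

theorem logDeriv_rpow_const {f : ℝ → ℝ} {x : ℝ} (hf : DifferentiableAt ℝ f x) (hx : 0 < f x)
    (p : ℝ) : logDeriv (fun y ↦ f y ^ p) x = p * logDeriv f x := by
  have hpow : f x ^ p ≠ 0 := (rpow_pos_of_pos hx p).ne'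
  rw [logDeriv_apply, logDeriv_apply, (hf.hasDerivAt.rpow_const (Or.inl hx.ne')).deriv,
    rpow_sub_one hx.ne']
  field_simp

/-- The power `X = a ^ k` of the scale factor `a` of a flat universe whose Hubble rate is
`s * a ^ (-k)`, as a function of the time `t`, with value `x₀` at time `t₀`. An equation of state
`p = w μ` with `μ = 3 A a ^ (-3 (w + 1))` corresponds to `k = 3 (1 + w) / 2` and `s = √A`. -/
def scaleFactorPow (k s x₀ t₀ t : ℝ) : ℝ :=
  x₀ + k * s * (t - t₀)

/-- The scale factor `a = X ^ (1 / k)` of a flat universe, where `X` is `scaleFactorPow`. It is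
meaningful only at times where `X` is positive. -/
noncomputable def scaleFactor (k s x₀ t₀ t : ℝ) : ℝ :=
  scaleFactorPow k s x₀ t₀ t ^ k⁻¹

/-- The time at which `scaleFactorPow` vanishes, provided `k * s ≠ 0`: a big rip for `k < 0 < s`,
a big bang for `0 < k` and `0 < s`. -/
noncomputable def singularTime (k s x₀ t₀ : ℝ) : ℝ :=
  t₀ - x₀ / (k * s)

section FlatUniverse

variable {k s x₀ t₀ t : ℝ}

theorem hasDerivAt_scaleFactorPow : HasDerivAt (scaleFactorPow k s x₀ t₀) (k * s) t :=
  ((((hasDerivAt_id t).sub_const t₀).const_mul (k * s)).const_add x₀).congr_deriv (mul_one _)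

theorem scaleFactorPow_eq_mul_sub_singularTime (hks : k * s ≠ 0) :
    scaleFactorPow k s x₀ t₀ t = k * s * (t - singularTime k s x₀ t₀) := by
  rw [scaleFactorPow, singularTime]
  linear_combination -mul_div_cancel₀ x₀ hks

theorem scaleFactorPow_singularTime (hks : k * s ≠ 0) :
    scaleFactorPow k s x₀ t₀ (singularTime k s x₀ t₀) = 0 := by
  rw [scaleFactorPow_eq_mul_sub_singularTime hks, sub_self, mul_zero]

theorem scaleFactorPow_pos_of_lt_singularTime (hks : k * s < 0) (ht : t < singularTime k s x₀ t₀) :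
    0 < scaleFactorPow k s x₀ t₀ t := by
  rw [scaleFactorPow_eq_mul_sub_singularTime hks.ne]
  exact mul_pos_of_neg_of_neg hks (sub_neg.mpr ht)

theorem logDeriv_scaleFactor (hk : k ≠ 0) (hX : 0 < scaleFactorPow k s x₀ t₀ t) :
    logDeriv (scaleFactor k s x₀ t₀) t = s * (scaleFactorPow k s x₀ t₀ t)⁻¹ :=
  calc logDeriv (scaleFactor k s x₀ t₀) t
      = k⁻¹ * logDeriv (scaleFactorPow k s x₀ t₀) t :=
        logDeriv_rpow_const hasDerivAt_scaleFactorPow.differentiableAt hX k⁻¹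
    _ = k⁻¹ * (k * s / scaleFactorPow k s x₀ t₀ t) := by
        rw [logDeriv_apply, hasDerivAt_scaleFactorPow.deriv]
    _ = s * (scaleFactorPow k s x₀ t₀ t)⁻¹ := by field_simp

theorem logDeriv_scaleFactor_sq (hk : k ≠ 0) (hX : 0 < scaleFactorPow k s x₀ t₀ t) :
    logDeriv (scaleFactor k s x₀ t₀) t ^ 2 = s ^ 2 * scaleFactor k s x₀ t₀ t ^ (-(2 * k)) := by
  have hexp : k⁻¹ * -(2 * k) = -2 := by field_simp
  rw [logDeriv_scaleFactor hk hX, scaleFactor, ← rpow_mul hX.le, hexp, rpow_neg hX.le, rpow_two,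
    mul_pow, inv_pow]

theorem tendsto_scaleFactorPow_singularTime (hks : k * s < 0) :
    Tendsto (scaleFactorPow k s x₀ t₀) (𝓝[<] singularTime k s x₀ t₀) (𝓝[>] 0) := by
  refine tendsto_nhdsWithin_iff.mpr ⟨?_, ?_⟩
  · rw [← scaleFactorPow_singularTime (x₀ := x₀) (t₀ := t₀) hks.ne]
    exact hasDerivAt_scaleFactorPow.continuousAt.mono_left nhdsWithin_le_nhds
  · filter_upwards [self_mem_nhdsWithin] with t ht
    exact scaleFactorPow_pos_of_lt_singularTime hks ht

theorem tendsto_scaleFactor_singularTime_atTop (hk : k < 0) (hs : 0 < s) :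
    Tendsto (scaleFactor k s x₀ t₀) (𝓝[<] singularTime k s x₀ t₀) atTop :=
  (tendsto_rpow_neg_nhdsGT_zero (inv_lt_zero.mpr hk)).comp
    (tendsto_scaleFactorPow_singularTime (mul_neg_of_neg_of_pos hk hs))

theorem tendsto_logDeriv_scaleFactor_singularTime_atTop (hk : k < 0) (hs : 0 < s) :
    Tendsto (logDeriv (scaleFactor k s x₀ t₀)) (𝓝[<] singularTime k s x₀ t₀) atTop := by
  have hks : k * s < 0 := mul_neg_of_neg_of_pos hk hs
  have hinv : Tendsto (fun t ↦ s * (scaleFactorPow k s x₀ t₀ t)⁻¹)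
      (𝓝[<] singularTime k s x₀ t₀) atTop :=
    (tendsto_inv_nhdsGT_zero.comp (tendsto_scaleFactorPow_singularTime hks)).const_mul_atTop hs
  refine hinv.congr' ?_
  filter_upwards [self_mem_nhdsWithin] with t ht
  exact (logDeriv_scaleFactor hk.ne (scaleFactorPow_pos_of_lt_singularTime hks ht)).symm

end FlatUniverse

/-- For `w < −1`, `A > 0`, `a₀ > 0`, with
`X(t) = a₀^{3(1+w)/2} + (3(1+w)√A/2)(t − t₀)` and
`t_rip = t₀ + 2a₀^{3(1+w)/2}/(3√A(−1−w))`, one has `X > 0` on `[t₀,t_rip)`,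
`X(t_rip) = 0`, and `a(t) = X(t)^{2/(3(1+w))}` satisfies the Friedmann
equation `(a′/a)² = A·a^{−3(w+1)}` on `(t₀,t_rip)`, with `a → ∞` and
`a′/a = √A·X⁻¹ → +∞` as `t → t_rip⁻`: a big-rip singularity at the finite
time `t_rip`. -/
theorem phantom_big_rip_explicit
    (w A a₀ t₀ : ℝ) (hw : w < -1) (hA : 0 < A) (ha₀ : 0 < a₀) :
    ∀ X : ℝ → ℝ,
      (∀ t, X t = a₀ ^ (3 * (1 + w) / 2) +
        3 * (1 + w) * Real.sqrt A / 2 * (t - t₀)) →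
    ∀ t_rip : ℝ,
      t_rip = t₀ + 2 * a₀ ^ (3 * (1 + w) / 2) / (3 * Real.sqrt A * (-1 - w)) →
    ∀ a : ℝ → ℝ,
      (∀ t, a t = X t ^ (2 / (3 * (1 + w)))) →
      (∀ t ∈ Set.Ico t₀ t_rip, 0 < X t) ∧
      X t_rip = 0 ∧
      (∀ t ∈ Set.Ioo t₀ t_rip,
        (deriv a t / a t) ^ 2 = A * a t ^ (-(3 * (w + 1)))) ∧
      Tendsto a (𝓝[<] t_rip) atTop ∧
      (∀ t ∈ Set.Ioo t₀ t_rip, deriv a t / a t = Real.sqrt A * (X t)⁻¹) ∧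
      Tendsto (fun t => deriv a t / a t) (𝓝[<] t_rip) atTop := by
  intro X hX t_rip h_rip a ha
  have hk : 3 * (1 + w) / 2 < 0 := by linarith
  have hs : 0 < √A := sqrt_pos.mpr hA
  have hks : 3 * (1 + w) / 2 * √A < 0 := mul_neg_of_neg_of_pos hk hs
  obtain rfl : X = scaleFactorPow (3 * (1 + w) / 2) √A (a₀ ^ (3 * (1 + w) / 2)) t₀ :=
    funext fun t ↦ by rw [hX, scaleFactorPow]; ring
  obtain rfl : a = scaleFactor (3 * (1 + w) / 2) √A (a₀ ^ (3 * (1 + w) / 2)) t₀ :=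
    funext fun t ↦ by rw [ha, scaleFactor, inv_div]
  obtain rfl : t_rip = singularTime (3 * (1 + w) / 2) √A (a₀ ^ (3 * (1 + w) / 2)) t₀ := by
    have hw₁ : 1 + w ≠ 0 := by linarith
    have hw₂ : -1 - w ≠ 0 := by linarith
    rw [h_rip, singularTime]
    field_simp
    ring
  refine ⟨fun t ht ↦ scaleFactorPow_pos_of_lt_singularTime hks ht.2,
    scaleFactorPow_singularTime hks.ne, fun t ht ↦ ?_,
    tendsto_scaleFactor_singularTime_atTop hk hs,
    fun t ht ↦ logDeriv_scaleFactor hk.ne (scaleFactorPow_pos_of_lt_singularTime hks ht.2),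
    tendsto_logDeriv_scaleFactor_singularTime_atTop hk hs⟩
  have hX_pos := scaleFactorPow_pos_of_lt_singularTime hks ht.2
  have hexp : -(3 * (w + 1)) = -(2 * (3 * (1 + w) / 2)) := by ring
  rw [← logDeriv_apply, hexp, logDeriv_scaleFactor_sq hk.ne hX_pos, sq_sqrt hA.le]
end

section
/- Let α ≠ 0, A > 0 and λ > 0 be reals. Define, for Υ ∈ (0,∞), x(Υ) = α·Υ^{1/4}, y(Υ) = (α/4)·Υ^{−3/4}, z(Υ) = (√3/(4√(Aλ)))·Υ^{−1}. Then (x,y,z) is an exact solution of the scalar-field braneworld system x′ = y, y′ = −λA·z²·x, z′ = −4y·z/x on (0,∞), and it satisfies y²/x² = (Aλ/3)·z² identically; hence it satisfies the constraint y²/x² = (Aλ/3)z² + kH²/x² if and only if kH² = 0, i.e. only for a flat brane. In particular, near Υ = 0 this (general) solution has x → 0, |y| → ∞, |z| → ∞: the warp factor collapses and the scalar-field energy density diverges at a finite distance from the brane. -/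
open Filter Topology Set Real

/-!
Along power laws `x = a t ^ p`, `y = x' = (p / t) x` and `z = c / t`, every term of each field
equation carries the same power of `t`, so the system `y' = -μ z² x`, `z' = -n y z / x` with
`y² / x² = β z²` reduces to the algebraic conditions `μ c² = p (1 - p)`, `n p = 1` and `β c² = p²`.
For `n = 4` and `β = μ / 3` they are met by `p = 1 / 4`, `μ c² = 3 / 16`. The constraint then
already holds without its curvature term `k H² / x²`, which must therefore vanish.
-/

/-- The power law `t ↦ a t ^ p`, the form taken by each component of a dominant balance. The power
is `Real.rpow`, so it has this meaning only for `0 < t`. -/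
noncomputable def powerLaw (a p t : ℝ) : ℝ := a * t ^ p

section PowerLaw

variable {a c n p t β μ : ℝ}

theorem powerLaw_ne_zero (ha : a ≠ 0) (ht : 0 < t) : powerLaw a p t ≠ 0 :=
  mul_ne_zero ha (rpow_pos_of_pos ht p).ne'

theorem powerLaw_neg_one (a t : ℝ) : powerLaw a (-1) t = a / t := by
  rw [powerLaw, rpow_neg_one, div_eq_mul_inv]

theorem powerLaw_mul_sub_one (a b p : ℝ) (ht : t ≠ 0) :
    powerLaw (a * b) (p - 1) t = b / t * powerLaw a p t := by
  rw [powerLaw, powerLaw, rpow_sub_one ht]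
  ring

theorem hasDerivAt_powerLaw (a p : ℝ) (ht : t ≠ 0) :
    HasDerivAt (powerLaw a p) (powerLaw (a * p) (p - 1) t) t :=
  ((hasDerivAt_rpow_const (Or.inl ht)).const_mul a).congr_deriv (mul_assoc a p _).symm

theorem tendsto_powerLaw_nhdsGT_zero (a : ℝ) (hp : 0 < p) :
    Tendsto (powerLaw a p) (𝓝[>] 0) (𝓝 0) := by
  have hcont : ContinuousAt (powerLaw a p) 0 :=
    (continuousAt_rpow_const 0 p (Or.inr hp.le)).const_mul a
  have hzero : powerLaw a p 0 = 0 := by rw [powerLaw, zero_rpow hp.ne', mul_zero]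
  simpa only [hzero] using hcont.tendsto.mono_left nhdsWithin_le_nhds

theorem tendsto_abs_powerLaw_nhdsGT_zero (ha : a ≠ 0) (hp : p < 0) :
    Tendsto (fun t => |powerLaw a p t|) (𝓝[>] 0) atTop := by
  refine ((tendsto_rpow_neg_nhdsGT_zero hp).const_mul_atTop (abs_pos.mpr ha)).congr' ?_
  filter_upwards [self_mem_nhdsWithin] with t (ht : 0 < t)
  rw [powerLaw, abs_mul, abs_of_pos (rpow_pos_of_pos ht p)]

theorem hasDerivAt_powerLaw_sub_one_of_balance (a : ℝ) (hμ : μ * c ^ 2 = p * (1 - p))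
    (ht : t ≠ 0) :
    HasDerivAt (powerLaw (a * p) (p - 1)) (-μ * powerLaw c (-1) t ^ 2 * powerLaw a p t) t := by
  refine (hasDerivAt_powerLaw _ _ ht).congr_deriv ?_
  calc powerLaw (a * p * (p - 1)) (p - 1 - 1) t
      = -(p * (1 - p)) / t ^ 2 * powerLaw a p t := by
        rw [powerLaw_mul_sub_one _ _ _ ht, powerLaw_mul_sub_one _ _ _ ht]
        ring
    _ = -μ * powerLaw c (-1) t ^ 2 * powerLaw a p t := by
        rw [← hμ, powerLaw_neg_one]
        ring

theorem powerLaw_mul_sub_one_div_powerLaw (p : ℝ) (ha : a ≠ 0) (ht : 0 < t) :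
    powerLaw (a * p) (p - 1) t / powerLaw a p t = p / t := by
  rw [powerLaw_mul_sub_one _ _ _ ht.ne', mul_div_cancel_right₀ _ (powerLaw_ne_zero ha ht)]

theorem hasDerivAt_powerLaw_neg_one_of_balance (c : ℝ) (ha : a ≠ 0) (hn : n * p = 1)
    (ht : 0 < t) :
    HasDerivAt (powerLaw c (-1))
      (-n * powerLaw (a * p) (p - 1) t * powerLaw c (-1) t / powerLaw a p t) t := by
  refine (hasDerivAt_powerLaw c (-1) ht.ne').congr_deriv ?_
  calc powerLaw (c * -1) (-1 - 1) t
      = -(n * p) / t * powerLaw c (-1) t := by rw [powerLaw_mul_sub_one _ _ _ ht.ne', hn]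
    _ = -n * (powerLaw (a * p) (p - 1) t / powerLaw a p t) * powerLaw c (-1) t := by
        rw [powerLaw_mul_sub_one_div_powerLaw p ha ht]
        ring
    _ = -n * powerLaw (a * p) (p - 1) t * powerLaw c (-1) t / powerLaw a p t := by ring

theorem powerLaw_sq_div_sq_of_balance (ha : a ≠ 0) (hβ : β * c ^ 2 = p ^ 2) (ht : 0 < t) :
    powerLaw (a * p) (p - 1) t ^ 2 / powerLaw a p t ^ 2 = β * powerLaw c (-1) t ^ 2 := by
  rw [← div_pow, powerLaw_mul_sub_one_div_powerLaw p ha ht, powerLaw_neg_one, div_pow, ← hβ,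
    div_pow, mul_div_assoc]

end PowerLaw

theorem forall_mem_eq_add_div_iff {ι K : Type*} [DivisionRing K] {s : Set ι} {f g h : ι → K} {b : K}
    (hs : s.Nonempty) (hfg : EqOn f g s) (hh : ∀ i ∈ s, h i ≠ 0) :
    (∀ i ∈ s, f i = g i + b / h i) ↔ b = 0 := by
  refine ⟨fun H => ?_, fun hb i hi => by rw [hb, zero_div, add_zero, hfg hi]⟩
  obtain ⟨i, hi⟩ := hs
  have hdiv : b / h i = 0 := left_eq_add.mp ((hfg hi).symm.trans (H i hi))
  exact (div_eq_zero_iff.mp hdiv).resolve_right (hh i hi)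

theorem mul_sqrt_div_mul_sqrt_sq {a μ : ℝ} (b : ℝ) (ha : 0 ≤ a) (hμ : 0 < μ) :
    μ * (√a / (b * √μ)) ^ 2 = a / b ^ 2 := by
  rw [div_pow, mul_pow, sq_sqrt ha, sq_sqrt hμ.le]
  field_simp

/-- The dominant balance `x = α·Υ^{1/4}`, `y = (α/4)·Υ^{−3/4}`,
`z = (√3/(4√(Aλ)))·Υ^{−1}` is an exact solution of the scalar-field braneworld
system `x′ = y`, `y′ = −λA z² x`, `z′ = −4yz/x` on `(0,∞)`, satisfies
`y²/x² = (Aλ/3)z²` identically, hence satisfies the constraint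
`y²/x² = (Aλ/3)z² + kH²/x²` iff `kH² = 0` (flat brane only); and near `Υ = 0`
it has `x → 0`, `|y| → ∞`, `|z| → ∞`: a finite-distance collapse singularity. -/
theorem scalar_field_braneworld_balance
    (α A lam : ℝ) (hα : α ≠ 0) (hA : 0 < A) (hlam : 0 < lam) :
    ∀ x y z : ℝ → ℝ,
      (∀ Υ : ℝ, x Υ = α * Υ ^ ((1 : ℝ) / 4)) →
      (∀ Υ : ℝ, y Υ = α / 4 * Υ ^ (-(3 : ℝ) / 4)) →
      (∀ Υ : ℝ, z Υ = Real.sqrt 3 / (4 * Real.sqrt (A * lam)) * Υ ^ (-1 : ℝ)) →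
      (∀ Υ : ℝ, 0 < Υ → HasDerivAt x (y Υ) Υ) ∧
      (∀ Υ : ℝ, 0 < Υ → HasDerivAt y (-(lam * A) * z Υ ^ 2 * x Υ) Υ) ∧
      (∀ Υ : ℝ, 0 < Υ → HasDerivAt z (-4 * y Υ * z Υ / x Υ) Υ) ∧
      (∀ Υ : ℝ, 0 < Υ → y Υ ^ 2 / x Υ ^ 2 = A * lam / 3 * z Υ ^ 2) ∧
      (∀ k H : ℝ,
        (∀ Υ : ℝ, 0 < Υ →
          y Υ ^ 2 / x Υ ^ 2 = A * lam / 3 * z Υ ^ 2 + k * H ^ 2 / x Υ ^ 2) ↔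
        k * H ^ 2 = 0) ∧
      Tendsto x (𝓝[>] 0) (𝓝 0) ∧
      Tendsto (fun Υ => |y Υ|) (𝓝[>] 0) atTop ∧
      Tendsto (fun Υ => |z Υ|) (𝓝[>] 0) atTop := by
  intro x y z hx hy hz
  set c := √3 / (4 * √(A * lam))
  have hμ : 0 < A * lam := mul_pos hA hlam
  have hc : c ≠ 0 := by positivity
  have hμc : A * lam * c ^ 2 = 3 / 4 ^ 2 := mul_sqrt_div_mul_sqrt_sq 4 zero_le_three hμ
  obtain rfl : x = powerLaw α (1 / 4) := funext hx
  obtain rfl : y = powerLaw (α * (1 / 4)) (1 / 4 - 1) := by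
    funext t
    rw [hy, powerLaw]
    norm_num [div_eq_mul_inv]
  obtain rfl : z = powerLaw c (-1) := funext hz
  have hflat : ∀ t, 0 < t → powerLaw (α * (1 / 4)) (1 / 4 - 1) t ^ 2 / powerLaw α (1 / 4) t ^ 2 =
      A * lam / 3 * powerLaw c (-1) t ^ 2 :=
    fun t => powerLaw_sq_div_sq_of_balance hα (by linear_combination hμc / 3)
  exact ⟨fun t ht => hasDerivAt_powerLaw _ _ ht.ne',
    fun t ht => hasDerivAt_powerLaw_sub_one_of_balance α (by linear_combination hμc) ht.ne',
    fun t => hasDerivAt_powerLaw_neg_one_of_balance c hα (by norm_num),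
    hflat,
    fun k H => forall_mem_eq_add_div_iff nonempty_Ioi hflat
      fun t ht => pow_ne_zero 2 (powerLaw_ne_zero hα ht),
    tendsto_powerLaw_nhdsGT_zero α (by norm_num),
    tendsto_abs_powerLaw_nhdsGT_zero (by positivity) (by norm_num),
    tendsto_abs_powerLaw_nhdsGT_zero hc (by norm_num)⟩
end

section
/- Let α ≠ 0, A > 0 and γ ∈ ℝ with γ ≠ −1 and γ ≠ −1/2, and set p = 1/(2(γ+1)). Define, for Υ ∈ (0,∞), x(Υ) = α·Υ^p, y(Υ) = α·p·Υ^{p−1}, w(Υ) = (3/(2A))·p²·Υ^{−2}. Then (x,y,w) is an exact solution of the perfect-fluid braneworld system x′ = y, y′ = −(2A(1+2γ)/3)·w·x, w′ = −4(1+γ)·(y/x)·w on (0,∞), and it satisfies the flat-brane constraint y²/x² = (2/3)·A·w identically. In particular w → ∞ as Υ → 0⁺, and x → 0 as Υ → 0⁺ when γ > −1/2 (collapse-brane singularity, since then 0 < p), while x → ∞ as Υ → 0⁺ when γ < −1 (big-rip-brane singularity, since then p < 0). -/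
open Filter Topology Set Real

/-! A power law `x = α Υ ^ p` has logarithmic derivative `y / x = p / Υ`, and the density of the
balance is normalized so that `(2 / 3) A w = (p / Υ) ^ 2`, which is the flat-brane constraint.
The two remaining field equations then reduce to the single algebraic relation
`2 (γ + 1) p = 1`: the `w`-equation in this form, the `y`-equation as `p - 1 = -(1 + 2 γ) p`.
The exponent has the sign of `γ + 1`, which decides whether `x` collapses or diverges at `0⁺`. -/

lemma hasDerivAt_const_mul_rpow (c q : ℝ) {t : ℝ} (ht : t ≠ 0) :
    HasDerivAt (fun s => c * s ^ q) (c * q * t ^ (q - 1)) t := by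
  simpa only [mul_assoc] using (Real.hasDerivAt_rpow_const (p := q) (Or.inl ht)).const_mul c

/-- The warp factor `x = α Υ ^ p` of the dominant balance. The exponent `p` is a free parameter;
its value for the fluid `P = γ ρ` enters through the relation `2 * (γ + 1) * p = 1`. -/
noncomputable def balanceWarp (α p Υ : ℝ) : ℝ := α * Υ ^ p

/-- The derivative `y = x′` of the warp factor of the dominant balance. -/
noncomputable def balanceWarpDeriv (α p Υ : ℝ) : ℝ := α * p * Υ ^ (p - 1)

/-- The fluid density `w` of the dominant balance, with coupling `A = κ₅² / 4`. -/
noncomputable def balanceDensity (A p Υ : ℝ) : ℝ := 3 / (2 * A) * p ^ 2 * Υ ^ (-2 : ℝ)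

section FieldEquations

variable {α A γ p Υ : ℝ}

lemma balanceWarpDeriv_eq_div_mul (hΥ : Υ ≠ 0) :
    balanceWarpDeriv α p Υ = p / Υ * balanceWarp α p Υ := by
  rw [balanceWarpDeriv, balanceWarp, Real.rpow_sub_one hΥ]
  ring

lemma balanceWarpDeriv_div_balanceWarp (hα : α ≠ 0) (hΥ : 0 < Υ) :
    balanceWarpDeriv α p Υ / balanceWarp α p Υ = p / Υ := by
  have hx : balanceWarp α p Υ ≠ 0 := mul_ne_zero hα (Real.rpow_pos_of_pos hΥ p).ne'
  rw [balanceWarpDeriv_eq_div_mul hΥ.ne', mul_div_cancel_right₀ _ hx]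

lemma two_thirds_mul_balanceDensity (hA : A ≠ 0) (p Υ : ℝ) :
    2 / 3 * A * balanceDensity A p Υ = (p / Υ) ^ 2 := by
  rw [balanceDensity, Real.rpow_neg_ofNat]
  field_simp

lemma balanceWarpDeriv_sq_div_balanceWarp_sq (hα : α ≠ 0) (hA : A ≠ 0) (hΥ : 0 < Υ) :
    balanceWarpDeriv α p Υ ^ 2 / balanceWarp α p Υ ^ 2 = 2 / 3 * A * balanceDensity A p Υ := by
  rw [← div_pow, balanceWarpDeriv_div_balanceWarp hα hΥ, two_thirds_mul_balanceDensity hA]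

lemma hasDerivAt_balanceWarp (α p : ℝ) (hΥ : Υ ≠ 0) :
    HasDerivAt (balanceWarp α p) (balanceWarpDeriv α p Υ) Υ :=
  hasDerivAt_const_mul_rpow α p hΥ

lemma hasDerivAt_balanceWarpDeriv (α : ℝ) (hA : A ≠ 0) (hp : 2 * (γ + 1) * p = 1) (hΥ : Υ ≠ 0) :
    HasDerivAt (balanceWarpDeriv α p)
      (-(2 * A * (1 + 2 * γ) / 3) * balanceDensity A p Υ * balanceWarp α p Υ) Υ := by
  have hp_sub_one : p - 1 = -(1 + 2 * γ) * p := by linear_combination hp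
  refine (hasDerivAt_const_mul_rpow (α * p) (p - 1) hΥ).congr_deriv ?_
  calc α * p * (p - 1) * Υ ^ (p - 1 - 1)
      = (p - 1) / Υ * balanceWarpDeriv α p Υ := by
        rw [balanceWarpDeriv, Real.rpow_sub_one hΥ (p - 1)]; ring
    _ = -(1 + 2 * γ) * (p / Υ) ^ 2 * balanceWarp α p Υ := by
        rw [balanceWarpDeriv_eq_div_mul hΥ, hp_sub_one]; ring
    _ = -(2 * A * (1 + 2 * γ) / 3) * balanceDensity A p Υ * balanceWarp α p Υ := by
        rw [← two_thirds_mul_balanceDensity hA]; ring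

lemma hasDerivAt_balanceDensity (A : ℝ) (hα : α ≠ 0) (hp : 2 * (γ + 1) * p = 1) (hΥ : 0 < Υ) :
    HasDerivAt (balanceDensity A p)
      (-4 * (1 + γ) * (balanceWarpDeriv α p Υ / balanceWarp α p Υ) * balanceDensity A p Υ) Υ := by
  refine (hasDerivAt_const_mul_rpow (3 / (2 * A) * p ^ 2) (-2) hΥ.ne').congr_deriv ?_
  calc 3 / (2 * A) * p ^ 2 * -2 * Υ ^ (-2 - 1 : ℝ)
      = -2 / Υ * balanceDensity A p Υ := by
        rw [balanceDensity, Real.rpow_sub_one hΥ.ne']; ring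
    _ = -4 * (1 + γ) * (p / Υ) * balanceDensity A p Υ := by
        linear_combination 2 / Υ * balanceDensity A p Υ * hp
    _ = -4 * (1 + γ) * (balanceWarpDeriv α p Υ / balanceWarp α p Υ) * balanceDensity A p Υ := by
        rw [balanceWarpDeriv_div_balanceWarp hα hΥ]

end FieldEquations

section Singularity

variable {α A p : ℝ}

lemma tendsto_balanceDensity_atTop (hA : 0 < A) (hp : p ≠ 0) :
    Tendsto (balanceDensity A p) (𝓝[>] 0) atTop :=
  (tendsto_rpow_neg_nhdsGT_zero (by norm_num)).const_mul_atTop (by positivity)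

lemma tendsto_balanceWarp_zero (α : ℝ) (hp : 0 < p) :
    Tendsto (balanceWarp α p) (𝓝[>] 0) (𝓝 0) := by
  have hpow : Tendsto (fun Υ : ℝ => Υ ^ p) (𝓝[>] 0) (𝓝 0) :=
    (tendsto_id.mono_left nhdsWithin_le_nhds).rpow_const_nhds_zero hp
  have hscaled : Tendsto (balanceWarp α p) (𝓝[>] 0) (𝓝 (α * 0)) := hpow.const_mul α
  rwa [mul_zero] at hscaled

lemma tendsto_abs_balanceWarp_atTop (hα : α ≠ 0) (hp : p < 0) :
    Tendsto (fun Υ => |balanceWarp α p Υ|) (𝓝[>] 0) atTop := by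
  refine ((tendsto_rpow_neg_nhdsGT_zero hp).const_mul_atTop (abs_pos.mpr hα)).congr' ?_
  filter_upwards [self_mem_nhdsWithin] with Υ (hΥ : 0 < Υ)
  rw [balanceWarp, abs_mul, abs_of_pos (Real.rpow_pos_of_pos hΥ p)]

end Singularity

theorem perfect_fluid_braneworld_balance_general
    {α A γ p : ℝ} (hα : α ≠ 0) (hA : 0 < A) (hγ : γ ≠ -1) (hp : p = 1 / (2 * (γ + 1)))
    {x y w : ℝ → ℝ} (hx : ∀ Υ : ℝ, x Υ = α * Υ ^ p) (hy : ∀ Υ : ℝ, y Υ = α * p * Υ ^ (p - 1))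
    (hw : ∀ Υ : ℝ, w Υ = 3 / (2 * A) * p ^ 2 * Υ ^ (-2 : ℝ)) :
    (∀ Υ : ℝ, 0 < Υ → HasDerivAt x (y Υ) Υ) ∧
    (∀ Υ : ℝ, 0 < Υ → HasDerivAt y (-(2 * A * (1 + 2 * γ) / 3) * w Υ * x Υ) Υ) ∧
    (∀ Υ : ℝ, 0 < Υ → HasDerivAt w (-4 * (1 + γ) * (y Υ / x Υ) * w Υ) Υ) ∧
    (∀ Υ : ℝ, 0 < Υ → y Υ ^ 2 / x Υ ^ 2 = 2 / 3 * A * w Υ) ∧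
    Tendsto w (𝓝[>] 0) atTop ∧
    (γ > -1 → 0 < p ∧ Tendsto x (𝓝[>] 0) (𝓝 0)) ∧
    (γ < -1 → p < 0 ∧ Tendsto (fun Υ => |x Υ|) (𝓝[>] 0) atTop) := by
  obtain rfl : x = balanceWarp α p := funext hx
  obtain rfl : y = balanceWarpDeriv α p := funext hy
  obtain rfl : w = balanceDensity A p := funext hw
  have hγ' : 2 * (γ + 1) ≠ 0 := mul_ne_zero two_ne_zero (mt eq_neg_of_add_eq_zero_left hγ)
  have hrel : 2 * (γ + 1) * p = 1 := by rw [hp, mul_one_div_cancel hγ']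
  have hp_pos (h : γ > -1) : 0 < p := by rw [hp, one_div_pos]; linarith
  have hp_neg (h : γ < -1) : p < 0 := by rw [hp, one_div_neg]; linarith
  exact ⟨fun _ hΥ => hasDerivAt_balanceWarp α p hΥ.ne',
    fun _ hΥ => hasDerivAt_balanceWarpDeriv α hA.ne' hrel hΥ.ne',
    fun _ hΥ => hasDerivAt_balanceDensity A hα hrel hΥ,
    fun _ hΥ => balanceWarpDeriv_sq_div_balanceWarp_sq hα hA.ne' hΥ,
    tendsto_balanceDensity_atTop hA (right_ne_zero_of_mul_eq_one hrel),
    fun h => ⟨hp_pos h, tendsto_balanceWarp_zero α (hp_pos h)⟩,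
    fun h => ⟨hp_neg h, tendsto_abs_balanceWarp_atTop hα (hp_neg h)⟩⟩

/-- With `p = 1/(2(γ+1))`, the dominant balance `x = α·Υ^p`,
`y = αp·Υ^{p−1}`, `w = (3/(2A))p²·Υ^{−2}` is an exact solution of the
perfect-fluid braneworld system `x′ = y`, `y′ = −(2A(1+2γ)/3)wx`,
`w′ = −4(1+γ)(y/x)w` on `(0,∞)` satisfying the flat-brane constraint
`y²/x² = (2/3)Aw` identically; `w → ∞` as `Υ → 0⁺`, and `x → 0` when
`γ > −1/2` (collapse-brane, `0 < p`) while `|x| → ∞` when `γ < −1`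
(big-rip-brane, `p < 0`). -/
theorem perfect_fluid_braneworld_balance
    (α A γ : ℝ) (hα : α ≠ 0) (hA : 0 < A) (hγ1 : γ ≠ -1) (hγ2 : γ ≠ -(1/2)) :
    ∀ p : ℝ, p = 1 / (2 * (γ + 1)) →
    ∀ x y w : ℝ → ℝ,
      (∀ Υ : ℝ, x Υ = α * Υ ^ p) →
      (∀ Υ : ℝ, y Υ = α * p * Υ ^ (p - 1)) →
      (∀ Υ : ℝ, w Υ = 3 / (2 * A) * p ^ 2 * Υ ^ (-2 : ℝ)) →
      (∀ Υ : ℝ, 0 < Υ → HasDerivAt x (y Υ) Υ) ∧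
      (∀ Υ : ℝ, 0 < Υ → HasDerivAt y (-(2 * A * (1 + 2 * γ) / 3) * w Υ * x Υ) Υ) ∧
      (∀ Υ : ℝ, 0 < Υ → HasDerivAt w (-4 * (1 + γ) * (y Υ / x Υ) * w Υ) Υ) ∧
      (∀ Υ : ℝ, 0 < Υ → y Υ ^ 2 / x Υ ^ 2 = 2 / 3 * A * w Υ) ∧
      Tendsto w (𝓝[>] 0) atTop ∧
      (γ > -(1/2) → 0 < p ∧ Tendsto x (𝓝[>] 0) (𝓝 0)) ∧
      (γ < -1 → p < 0 ∧ Tendsto (fun Υ => |x Υ|) (𝓝[>] 0) atTop) := by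
  intro p hp x y w hx hy hw
  have ⟨hx', hy', hw', hflat, hblowup, hcollapse, hrip⟩ :=
    perfect_fluid_braneworld_balance_general hα hA hγ1 hp hx hy hw
  exact ⟨hx', hy', hw', hflat, hblowup, fun hγ => hcollapse (by linarith), hrip⟩
end

section
/- Let A > 0 and H > 0 and define a : ℝ → ℝ by a(t) = A·cosh(Ht) (the closed de Sitter universe, k = 1). Then: (i) for every t > 0 the closed-trapped-surface condition holds at r = π/2, i.e. a′(t) = AH·sinh(Ht) > 0 = |cot(π/2)|; (ii) nevertheless the electric parts of the Bel-Robinson energy are bounded on ℝ: |E|(t) = √3·|a″(t)/a(t)| = √3·H² for all t, and |D|(t) = √3·(a′(t)²/a(t)² + 1/a(t)²) = √3·(H²·tanh²(Ht) + 1/(A²cosh²(Ht))) ≤ √3·(H² + 1/A²) for all t. Hence the existence of closed trapped surfaces is compatible with a bounded Bel-Robinson energy (and with geodesic completeness) in de Sitter space. -/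
open Real

/-! For `a(t) = A cosh (H t)` the acceleration is `a″ = H² a`, so `|E|` is constant, while the
Hubble rate `a′/a = H tanh (H t)` stays below `H` in absolute value and `a` stays above `A`, so
`|D|` is bounded. On the equator `r = π / 2` the trapping condition only asks that the universe be
expanding, which happens for all `t > 0`. -/

section RobertsonWalker

/-- The condition for a closed trapped surface at `(t, r)` in the closed (`k = 1`)
Robertson–Walker universe with scale factor `a`. -/
def IsClosedTrapped (a : ℝ → ℝ) (t r : ℝ) : Prop :=
  |cot r| < deriv a t

/-- The electric part `|E|` of the Bel-Robinson energy of the closed Robertson–Walker universe with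
scale factor `a`. -/
noncomputable def belRobinsonE (a : ℝ → ℝ) (t : ℝ) : ℝ :=
  √3 * |deriv (deriv a) t / a t|

/-- The electric part `|D|` of the Bel-Robinson energy of the closed Robertson–Walker universe with
scale factor `a`; the bracket is nonnegative, so its absolute value is not taken. -/
noncomputable def belRobinsonD (a : ℝ → ℝ) (t : ℝ) : ℝ :=
  √3 * (deriv a t ^ 2 / a t ^ 2 + 1 / a t ^ 2)

variable {a : ℝ → ℝ} {t : ℝ}

theorem isClosedTrapped_pi_div_two : IsClosedTrapped a t (π / 2) ↔ 0 < deriv a t := by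
  rw [IsClosedTrapped, cot_eq_cos_div_sin, cos_pi_div_two, zero_div, abs_zero]

theorem belRobinsonE_of_deriv_deriv_eq_mul {k : ℝ} (hat : a t ≠ 0)
    (h : deriv (deriv a) t = k * a t) : belRobinsonE a t = √3 * |k| := by
  rw [belRobinsonE, h, mul_div_cancel_right₀ k hat]

theorem belRobinsonD_eq_logDeriv (a : ℝ → ℝ) (t : ℝ) :
    belRobinsonD a t = √3 * (logDeriv a t ^ 2 + 1 / a t ^ 2) := by
  rw [belRobinsonD, logDeriv_apply, div_pow]

theorem belRobinsonD_le {h m : ℝ} (hm : 0 < m) (hlog : |logDeriv a t| ≤ h) (hat : m ≤ |a t|) :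
    belRobinsonD a t ≤ √3 * (h ^ 2 + 1 / m ^ 2) := by
  rw [belRobinsonD_eq_logDeriv, ← sq_abs (logDeriv a t), ← sq_abs (a t)]
  gcongr

end RobertsonWalker

section DeSitter

/-- The scale factor `t ↦ A cosh (H t)` of the closed de Sitter universe. -/
noncomputable def deSitterScale (A H t : ℝ) : ℝ :=
  A * cosh (H * t)

variable {A : ℝ}

theorem deSitterScale_ne_zero (hA : A ≠ 0) (H t : ℝ) : deSitterScale A H t ≠ 0 :=
  mul_ne_zero hA (cosh_pos _).ne'

theorem abs_le_abs_deSitterScale (A H t : ℝ) : |A| ≤ |deSitterScale A H t| := by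
  rw [deSitterScale, abs_mul, abs_of_pos (cosh_pos _)]
  exact le_mul_of_one_le_right (abs_nonneg A) (one_le_cosh _)

theorem deriv_deSitterScale (A H t : ℝ) :
    deriv (deSitterScale A H) t = A * H * sinh (H * t) := by
  have h : HasDerivAt (deSitterScale A H) (A * (sinh (H * t) * H)) t :=
    ((hasDerivAt_const_mul H).cosh).const_mul A
  rw [h.deriv]
  ring

theorem deriv_deriv_deSitterScale (A H t : ℝ) :
    deriv (deriv (deSitterScale A H)) t = H ^ 2 * deSitterScale A H t := by
  have h : HasDerivAt (fun s ↦ A * H * sinh (H * s)) (A * H * (cosh (H * t) * H)) t :=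
    ((hasDerivAt_const_mul H).sinh).const_mul (A * H)
  rw [funext (deriv_deSitterScale A H), h.deriv, deSitterScale]
  ring

theorem deriv_deSitterScale_pos_iff {H t : ℝ} (hA : 0 < A) (hH : 0 < H) :
    0 < deriv (deSitterScale A H) t ↔ 0 < t := by
  rw [deriv_deSitterScale, mul_pos_iff_of_pos_left (mul_pos hA hH), sinh_pos_iff,
    mul_pos_iff_of_pos_left hH]

theorem logDeriv_deSitterScale (hA : A ≠ 0) (H t : ℝ) :
    logDeriv (deSitterScale A H) t = H * tanh (H * t) := by
  rw [logDeriv_apply, deriv_deSitterScale, deSitterScale, mul_assoc, mul_div_mul_left _ _ hA,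
    mul_div_assoc, tanh_eq_sinh_div_cosh]

theorem abs_logDeriv_deSitterScale_le (hA : A ≠ 0) (H t : ℝ) :
    |logDeriv (deSitterScale A H) t| ≤ |H| := by
  rw [logDeriv_deSitterScale hA, abs_mul]
  exact mul_le_of_le_one_right (abs_nonneg H) (abs_tanh_lt_one _).le

theorem belRobinsonE_deSitterScale (hA : A ≠ 0) (H t : ℝ) :
    belRobinsonE (deSitterScale A H) t = √3 * H ^ 2 := by
  rw [belRobinsonE_of_deriv_deriv_eq_mul (deSitterScale_ne_zero hA H t)
    (deriv_deriv_deSitterScale A H t), abs_sq]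

theorem belRobinsonD_deSitterScale (hA : A ≠ 0) (H t : ℝ) :
    belRobinsonD (deSitterScale A H) t =
      √3 * (H ^ 2 * tanh (H * t) ^ 2 + 1 / (A ^ 2 * cosh (H * t) ^ 2)) := by
  rw [belRobinsonD_eq_logDeriv, logDeriv_deSitterScale hA, deSitterScale, mul_pow, mul_pow]

theorem belRobinsonD_deSitterScale_le (hA : A ≠ 0) (H t : ℝ) :
    belRobinsonD (deSitterScale A H) t ≤ √3 * (H ^ 2 + 1 / A ^ 2) := by
  simpa only [sq_abs] using belRobinsonD_le (abs_pos.2 hA) (abs_logDeriv_deSitterScale_le hA H t)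
    (abs_le_abs_deSitterScale A H t)

theorem isClosedTrapped_deSitterScale {H t : ℝ} (hA : 0 < A) (hH : 0 < H) (ht : 0 < t) :
    IsClosedTrapped (deSitterScale A H) t (π / 2) :=
  isClosedTrapped_pi_div_two.2 ((deriv_deSitterScale_pos_iff hA hH).2 ht)

end DeSitter

/-- For the closed de Sitter universe `a(t) = A·cosh(Ht)`:
(i) for every `t > 0` the closed-trapped-surface condition holds at `r = π/2`,
i.e. `a′(t) = AH·sinh(Ht) > |cot(π/2)|`; (ii) nevertheless the electric parts
of the Bel-Robinson energy are bounded: `|E|(t) = √3·|a″/a| = √3·H²` and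
`|D|(t) = √3·(a′²/a² + 1/a²) = √3·(H²tanh²(Ht) + 1/(A²cosh²(Ht))) ≤
√3·(H² + 1/A²)` for all `t`. Closed trapped surfaces are thus compatible with
bounded Bel-Robinson energy (and geodesic completeness) in de Sitter space. -/
theorem deSitter_trapped_surfaces_bounded_BelRobinson
    (A H : ℝ) (hA : 0 < A) (hH : 0 < H) :
    ∀ a : ℝ → ℝ, (∀ t, a t = A * Real.cosh (H * t)) →
      (∀ t : ℝ, 0 < t →
        deriv a t = A * H * Real.sinh (H * t) ∧
        A * H * Real.sinh (H * t) > |Real.cot (π / 2)|) ∧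
      (∀ t : ℝ,
        Real.sqrt 3 * |deriv (deriv a) t / a t| = Real.sqrt 3 * H ^ 2) ∧
      (∀ t : ℝ,
        Real.sqrt 3 * ((deriv a t) ^ 2 / a t ^ 2 + 1 / a t ^ 2) =
          Real.sqrt 3 * (H ^ 2 * Real.tanh (H * t) ^ 2 +
            1 / (A ^ 2 * Real.cosh (H * t) ^ 2))) ∧
      (∀ t : ℝ,
        Real.sqrt 3 * ((deriv a t) ^ 2 / a t ^ 2 + 1 / a t ^ 2) ≤
          Real.sqrt 3 * (H ^ 2 + 1 / A ^ 2)) := by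
  intro a ha
  obtain rfl : a = deSitterScale A H := funext ha
  refine ⟨fun t ht ↦ ⟨deriv_deSitterScale A H t, ?_⟩, belRobinsonE_deSitterScale hA.ne' H,
    belRobinsonD_deSitterScale hA.ne' H, belRobinsonD_deSitterScale_le hA.ne' H⟩
  rw [← deriv_deSitterScale]
  exact isClosedTrapped_deSitterScale hA hH ht
end
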